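/- arXiv:1401.0780 — 2 statements merged into one kernel-verified Lean document; each statement's English description precedes it below -/
import Mathlib

section
/- Suppose {X_{j,k}} and {X'_{j,k}} are two centered stationary Gaussian processes, each satisfying the standing assumption, with spectral measures ν = f·Leb + ν_d and ν' = f·Leb + ν'_d respectively, having the same absolutely continuous density f (but possibly different discrete components ν_d, ν'_d). If μ and μ' are deterministic probability measures such that ESD(W_N/√N) → μ and ESD(W'_N/√N) → μ' weakly in probability, where W_N and W'_N are the symmetrized matrices built from the two processes, then μ = μ'. -/
open MeasureTheory ProbabilityTheory Filter Real

noncomputable section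

/-- The square `(-π, π]²` on which the spectral measure lives. -/
def specBox : Set (ℝ × ℝ) := Set.Ioc (-π) π ×ˢ Set.Ioc (-π) π

/-- `(1/N) ∑_j g(λ_j(A))`, the integral of `g` against the empirical spectral
distribution of a symmetric `N × N` real matrix `A` (junk value `0` if `A` is
not symmetric). -/
def esdEval {N : ℕ} (A : Matrix (Fin N) (Fin N) ℝ) (g : ℝ → ℝ) : ℝ :=
  if hA : A.IsHermitian then (N : ℝ)⁻¹ * ∑ j, g (hA.eigenvalues j) else 0

/-- The (random) empirical spectral distributions of `A N` converge weakly in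
probability to the probability measure `μ`: for every bounded continuous `g`,
`∫ g d(ESD(A N)) → ∫ g dμ` in probability. -/
def ESDTendstoInProb {Ω : Type*} [MeasurableSpace Ω] (P : Measure Ω)
    (A : (N : ℕ) → Ω → Matrix (Fin N) (Fin N) ℝ) (μ : Measure ℝ) : Prop :=
  ∀ g : ℝ → ℝ, Continuous g → (∃ C, ∀ x, |g x| ≤ C) →
    ∀ ε > 0, Tendsto (fun N => P {ω | ε ≤ |esdEval (A N ω) g - ∫ x, g x ∂μ|})
      atTop (nhds 0)

/-- The symmetric matrix `W_N/√N`, where `W_N(i,j) = X_{i,j} + X_{j,i}`,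
`1 ≤ i,j ≤ N`. -/
def scaledW {Ω : Type*} (X : ℤ → ℤ → Ω → ℝ) (N : ℕ) (ω : Ω) :
    Matrix (Fin N) (Fin N) ℝ :=
  fun i j => (Real.sqrt N)⁻¹ *
    (X ((i : ℕ) + 1) ((j : ℕ) + 1) ω + X ((j : ℕ) + 1) ((i : ℕ) + 1) ω)

/-- A centered stationary Gaussian process indexed by `ℤ²` with positive
variance: every finite real linear combination is a centered Gaussian random
variable, and second moments are shift invariant. -/
structure StatGauss {Ω : Type*} [MeasurableSpace Ω] (P : Measure Ω)
    (X : ℤ → ℤ → Ω → ℝ) : Prop where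
  meas : ∀ j k, Measurable (X j k)
  gauss : ∀ c : (ℤ × ℤ) →₀ ℝ, ∃ v : NNReal,
    P.map (fun ω => ∑ p ∈ c.support, c p * X p.1 p.2 ω) = gaussianReal 0 v
  var_pos : 0 < ∫ ω, (X 0 0 ω) ^ 2 ∂P
  stat : ∀ j k u v : ℤ,
    ∫ ω, X j k ω * X (j + u) (k + v) ω ∂P = ∫ ω, X 0 0 ω * X u v ω ∂P

/-- The spectral measure `ν` of the process `X` (from the Herglotz
representation), together with the standing assumption of the paper:
`ν = ν_ac + ν_d`, where `ν_ac` is absolutely continuous with respect to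
Lebesgue measure with density `f ≥ 0` and `ν_d = νd` is discrete (supported on
a countable set). -/
structure SpectralDecomp {Ω : Type*} [MeasurableSpace Ω] (P : Measure Ω)
    (X : ℤ → ℤ → Ω → ℝ) (ν νd : Measure (ℝ × ℝ)) (f : ℝ × ℝ → ℝ) : Prop where
  finite : IsFiniteMeasure ν
  support : ν specBoxᶜ = 0
  herglotz : ∀ u v : ℤ,
    (∫ q, Complex.exp (Complex.I * ((u * q.1 + v * q.2 : ℝ) : ℂ)) ∂ν)
      = ((∫ ω, X 0 0 ω * X u v ω ∂P : ℝ) : ℂ)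
  f_nonneg : ∀ q, 0 ≤ f q
  f_meas : Measurable f
  discrete : ∃ s : Set (ℝ × ℝ), s.Countable ∧ νd sᶜ = 0
  decomp : ν = (volume.restrict specBox).withDensity
      (fun q => ENNReal.ofReal (f q)) + νd

/-!
Up to the factor `√N`, the matrix `W_N` is a linear function of the field on the `N × N` box, and
the law of a stationary Gaussian field there depends additively, through convolution, on its
spectral measure. An atom of the spectral measure contributes Gaussian multiples of a cosine and a
sine wave, hence two perturbations of rank at most `4`, which move the integral of a monotone
function with values in `[0, 1]` against the empirical spectral distribution by at most `8 / N`.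
By the Hoffman–Wielandt inequality, a spectral measure of total mass `δ` moves the integral of a
`K`-Lipschitz function by at most `2K√δ` on average. Splitting a discrete spectral measure into
finitely many atoms and a remainder of small mass, one sees that adding it changes the expected
integrals by `o(1)`. Adding `ν_d'` to the first field and `ν_d` to the second gives both fields the
same law.
-/

section SpectralPerturbation

open Matrix
open scoped InnerProductSpace Matrix.Norms.Frobenius

variable {𝕜 n : Type*} [RCLike 𝕜] [Fintype n] [DecidableEq n] {A B : Matrix n n 𝕜}

lemma toEuclideanLin_eigenvectorBasis (hA : A.IsHermitian) (i : n) :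
    A.toEuclideanLin (hA.eigenvectorBasis i) =
      (hA.eigenvalues i : 𝕜) • hA.eigenvectorBasis i := by
  ext k
  simpa [RCLike.real_smul_eq_coe_mul] using congrFun (hA.mulVec_eigenvectorBasis i) k

lemma inner_eigenvectorBasis_toEuclideanLin (hA : A.IsHermitian) (i : n)
    (v : EuclideanSpace 𝕜 n) :
    ⟪hA.eigenvectorBasis i, A.toEuclideanLin v⟫_𝕜 =
      hA.eigenvalues i * ⟪hA.eigenvectorBasis i, v⟫_𝕜 := by
  rw [← isSymmetric_toEuclideanLin_iff.2 hA, toEuclideanLin_eigenvectorBasis, inner_smul_left,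
    RCLike.conj_ofReal]

lemma re_inner_toEuclideanLin_self (hA : A.IsHermitian) (v : EuclideanSpace 𝕜 n) :
    RCLike.re ⟪v, A.toEuclideanLin v⟫_𝕜 =
      ∑ i, hA.eigenvalues i * ‖⟪hA.eigenvectorBasis i, v⟫_𝕜‖ ^ 2 := by
  rw [← hA.eigenvectorBasis.sum_inner_mul_inner, map_sum]
  refine Finset.sum_congr rfl fun i _ => ?_
  rw [inner_eigenvectorBasis_toEuclideanLin, mul_left_comm, ← inner_conj_symm v,
    RCLike.conj_mul, RCLike.re_ofReal_mul]
  norm_cast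

/-- The quadratic forms of `A` and `B` agree on `ker (A - B)`; a common vector which `A` sees only
through eigenvalues in `S` and `B` only through eigenvalues below `S` must vanish. -/
lemma eq_zero_of_inner_eigenvectorBasis_eq_zero (hA : A.IsHermitian) (hB : B.IsHermitian)
    {S : Set ℝ} (hS : IsUpperSet S) {v : EuclideanSpace 𝕜 n}
    (hvA : ∀ i, hA.eigenvalues i ∉ S → ⟪hA.eigenvectorBasis i, v⟫_𝕜 = 0)
    (hvB : ∀ j, hB.eigenvalues j ∈ S → ⟪hB.eigenvectorBasis j, v⟫_𝕜 = 0)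
    (hv : A.toEuclideanLin v = B.toEuclideanLin v) : v = 0 := by
  set a : n → ℝ := fun i => ‖⟪hA.eigenvectorBasis i, v⟫_𝕜‖ ^ 2 with ha
  set b : n → ℝ := fun j => ‖⟪hB.eigenvectorBasis j, v⟫_𝕜‖ ^ 2 with hb
  have h_sum : ∑ i, ∑ j, (hA.eigenvalues i - hB.eigenvalues j) * (a i * b j) = 0 := by
    have h_form : ∑ i, hA.eigenvalues i * a i = ∑ j, hB.eigenvalues j * b j := by
      rw [← re_inner_toEuclideanLin_self, ← re_inner_toEuclideanLin_self, hv]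
    have h_norm : ∑ i, a i = ∑ j, b j := by
      rw [ha, hb, hA.eigenvectorBasis.sum_sq_norm_inner_right,
        hB.eigenvectorBasis.sum_sq_norm_inner_right]
    calc ∑ i, ∑ j, (hA.eigenvalues i - hB.eigenvalues j) * (a i * b j)
        = (∑ i, hA.eigenvalues i * a i) * ∑ j, b j - (∑ i, a i) * ∑ j, hB.eigenvalues j * b j := by
          simp only [Finset.sum_mul_sum, ← Finset.sum_sub_distrib]
          exact Finset.sum_congr rfl fun i _ => Finset.sum_congr rfl fun j _ => by ring
      _ = 0 := by rw [h_form, h_norm]; ring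
  have h_term : ∀ i j, a i * b j = 0 ∨ hB.eigenvalues j < hA.eigenvalues i := fun i j => by
    by_cases hi : hA.eigenvalues i ∈ S
    · by_cases hj : hB.eigenvalues j ∈ S
      · exact .inl (by simp [hb, hvB j hj])
      · exact .inr (lt_of_not_ge fun h => hj (hS h hi))
    · exact .inl (by simp [ha, hvA i hi])
  have h_nonneg : ∀ i j, 0 ≤ (hA.eigenvalues i - hB.eigenvalues j) * (a i * b j) := fun i j => by
    rcases h_term i j with h | h
    · simp [h]
    · exact mul_nonneg (sub_nonneg.2 h.le) (by positivity)
  have h_zero : ∀ i j, a i * b j = 0 := fun i j => by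
    rw [Finset.sum_eq_zero_iff_of_nonneg fun i _ => Finset.sum_nonneg fun j _ => h_nonneg i j]
      at h_sum
    have h_ij := (Finset.sum_eq_zero_iff_of_nonneg fun j _ => h_nonneg i j).1
      (h_sum i (Finset.mem_univ i)) j (Finset.mem_univ j)
    exact (h_term i j).elim id fun h => (mul_eq_zero.1 h_ij).resolve_left (sub_pos.2 h).ne'
  have h_prod : ‖v‖ ^ 2 * ‖v‖ ^ 2 = 0 := by
    nth_rw 1 [← hA.eigenvectorBasis.sum_sq_norm_inner_right v]
    rw [← hB.eigenvectorBasis.sum_sq_norm_inner_right v, Finset.sum_mul_sum]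
    exact Finset.sum_eq_zero fun i _ => Finset.sum_eq_zero fun j _ => h_zero i j
  simpa using h_prod

theorem card_eigenvalues_mem_le_add_rank (hA : A.IsHermitian) (hB : B.IsHermitian)
    {S : Set ℝ} (hS : IsUpperSet S) :
    Nat.card {i // hA.eigenvalues i ∈ S} ≤
      Nat.card {j // hB.eigenvalues j ∈ S} + (A - B).rank := by
  classical
  let coords : EuclideanSpace 𝕜 n →ₗ[𝕜]
      ({i // hA.eigenvalues i ∉ S} → 𝕜) × ({j // hB.eigenvalues j ∈ S} → 𝕜) ×
        LinearMap.range (A - B).toEuclideanLin :=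
    (LinearMap.pi fun i => innerₛₗ 𝕜 (hA.eigenvectorBasis i.1)).prod
      ((LinearMap.pi fun j => innerₛₗ 𝕜 (hB.eigenvectorBasis j.1)).prod
        (A - B).toEuclideanLin.rangeRestrict)
  have h_inj : Function.Injective coords := by
    rw [injective_iff_map_eq_zero]
    intro v hv
    obtain ⟨hvA, hvB, hv⟩ := by simpa [coords, funext_iff] using hv
    have hv : A.toEuclideanLin v = B.toEuclideanLin v := by
      simpa [Subtype.ext_iff, sub_eq_zero] using hv
    exact eq_zero_of_inner_eigenvectorBasis_eq_zero hA hB hS hvA hvB hv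
  have h_dim := LinearMap.finrank_le_finrank_of_injective h_inj
  rw [Module.finrank_prod, Module.finrank_prod, finrank_euclideanSpace,
    Module.finrank_fintype_fun_eq_card, Module.finrank_fintype_fun_eq_card,
    Fintype.card_subtype_compl] at h_dim
  have h_rank : Module.finrank 𝕜 (LinearMap.range (A - B).toEuclideanLin) = (A - B).rank := by
    rw [toEuclideanLin_eq_toLin_orthonormal, ← rank_eq_finrank_range_toLin]
  have h_le := Fintype.card_subtype_le fun i => hA.eigenvalues i ∈ S
  rw [Nat.card_eq_fintype_card, Nat.card_eq_fintype_card]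
  omega

lemma antitone_card_le {ι : Type*} [Finite ι] (u : ι → ℝ) :
    Antitone fun s => (Nat.card {i // s ≤ u i} : ℝ) := fun _ _ hst =>
  Nat.cast_le.2 (Nat.card_mono (Set.toFinite _) fun _ h => hst.trans h)

lemma integral_card_le {ι : Type*} [Fintype ι] {u : ι → ℝ} {m M : ℝ}
    (hu : ∀ i, u i ∈ Set.Icc m M) :
    ∫ s in m..M, (Nat.card {i // s ≤ u i} : ℝ) = ∑ i, (u i - m) := by
  classical
  have h_card : ∀ s, (Nat.card {i // s ≤ u i} : ℝ) =
      ∑ i, {s | s ≤ u i}.indicator (fun _ => (1 : ℝ)) s := fun s => by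
    simp [Set.indicator_apply, Finset.sum_boole, Fintype.card_subtype]
  have h_int : ∀ i, IntervalIntegrable ({s | s ≤ u i}.indicator fun _ => (1 : ℝ)) volume m M :=
    fun i => ⟨(integrable_const 1).indicator measurableSet_Iic,
      (integrable_const 1).indicator measurableSet_Iic⟩
  simp only [h_card]
  rw [intervalIntegral.integral_finsetSum fun i _ => h_int i]
  exact Finset.sum_congr rfl fun i _ => by
    rw [intervalIntegral.integral_indicator (hu i)]; simp

lemma sum_le_sum_add_of_card_le {ι : Type*} [Fintype ι] {u v : ι → ℝ} {m M : ℝ} {r : ℕ}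
    (hmM : m ≤ M) (hu : ∀ i, u i ∈ Set.Icc m M) (hv : ∀ i, v i ∈ Set.Icc m M)
    (h : ∀ s, Nat.card {i // s ≤ u i} ≤ Nat.card {i // s ≤ v i} + r) :
    ∑ i, u i ≤ ∑ i, v i + r * (M - m) := by
  have h_int : ∫ s in m..M, (Nat.card {i // s ≤ u i} : ℝ) ≤
      ∫ s in m..M, ((Nat.card {i // s ≤ v i} : ℝ) + r) :=
    intervalIntegral.integral_mono_on hmM (antitone_card_le u).intervalIntegrable
      ((antitone_card_le v).intervalIntegrable.add intervalIntegrable_const)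
      fun s _ => by exact_mod_cast h s
  rw [intervalIntegral.integral_add (antitone_card_le v).intervalIntegrable
    intervalIntegrable_const, integral_card_le hu, integral_card_le hv,
    intervalIntegral.integral_const, smul_eq_mul, Finset.sum_sub_distrib,
    Finset.sum_sub_distrib] at h_int
  linarith

theorem sum_eigenvalues_le_add_rank_mul (hA : A.IsHermitian) (hB : B.IsHermitian) {g : ℝ → ℝ}
    (hg : Monotone g) {m M : ℝ} (hgm : ∀ x, g x ∈ Set.Icc m M) :
    ∑ i, g (hA.eigenvalues i) ≤ ∑ j, g (hB.eigenvalues j) + (A - B).rank * (M - m) :=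
  sum_le_sum_add_of_card_le ((hgm 0).1.trans (hgm 0).2) (fun _ => hgm _) (fun _ => hgm _) fun s =>
    card_eigenvalues_mem_le_add_rank hA hB (S := {x | s ≤ g x}) fun _ _ hxy hx => hx.trans (hg hxy)

lemma frobenius_norm_sq (D : Matrix n n 𝕜) : ‖D‖ ^ 2 = ∑ i, ∑ j, ‖D i j‖ ^ 2 := by
  rw [frobenius_norm_def, ← Real.sqrt_eq_rpow]
  simp only [Real.rpow_two]
  exact Real.sq_sqrt (by positivity)

lemma sum_norm_sq_toEuclideanLin {ι : Type*} [Fintype ι]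
    (b : OrthonormalBasis ι 𝕜 (EuclideanSpace 𝕜 n)) (D : Matrix n n 𝕜) :
    ∑ j, ‖D.toEuclideanLin (b j)‖ ^ 2 = ‖D‖ ^ 2 := by
  have h_row : ∀ k j, ‖D.toEuclideanLin (b j) k‖ = ‖⟪WithLp.toLp 2 (star (D k)), b j⟫_𝕜‖ := by
    intro k j
    simp [EuclideanSpace.inner_eq_star_dotProduct, mulVec, dotProduct_comm]
  simp only [EuclideanSpace.norm_sq_eq, h_row]
  rw [Finset.sum_comm, frobenius_norm_sq]
  simp [b.sum_sq_norm_inner_left, EuclideanSpace.norm_sq_eq]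

/-- The weights `‖⟪uᵢ, wⱼ⟫‖ ^ 2` between two orthonormal eigenbases form a doubly stochastic
matrix: this is the coupling behind the Hoffman–Wielandt inequality. -/
lemma sum_sub_eigenvalues_sq_mul (hA : A.IsHermitian) (hB : B.IsHermitian) :
    ∑ i, ∑ j, (hA.eigenvalues i - hB.eigenvalues j) ^ 2 *
      ‖⟪hA.eigenvectorBasis i, hB.eigenvectorBasis j⟫_𝕜‖ ^ 2 = ‖A - B‖ ^ 2 := by
  have h_entry : ∀ i j, ‖⟪hA.eigenvectorBasis i, (A - B).toEuclideanLin (hB.eigenvectorBasis j)⟫_𝕜‖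
      ^ 2 = (hA.eigenvalues i - hB.eigenvalues j) ^ 2 *
        ‖⟪hA.eigenvectorBasis i, hB.eigenvectorBasis j⟫_𝕜‖ ^ 2 := by
    intro i j
    rw [map_sub, LinearMap.sub_apply, inner_sub_right,
      inner_eigenvectorBasis_toEuclideanLin, toEuclideanLin_eigenvectorBasis, inner_smul_right,
      ← sub_mul, norm_mul, mul_pow, ← RCLike.ofReal_sub, RCLike.norm_ofReal, sq_abs]
  simp only [← h_entry]
  rw [Finset.sum_comm, ← sum_norm_sq_toEuclideanLin hB.eigenvectorBasis]
  simp only [hA.eigenvectorBasis.sum_sq_norm_inner_right]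

theorem abs_sum_eigenvalues_sub_le_of_lipschitz (hA : A.IsHermitian) (hB : B.IsHermitian)
    {g : ℝ → ℝ} {K : NNReal} (hg : LipschitzWith K g) :
    |∑ i, g (hA.eigenvalues i) - ∑ j, g (hB.eigenvalues j)| ≤
      K * (√(Fintype.card n) * ‖A - B‖) := by
  set W : n → n → ℝ := fun i j => ‖⟪hA.eigenvectorBasis i, hB.eigenvectorBasis j⟫_𝕜‖
  have h_row : ∀ i, ∑ j, W i j ^ 2 = 1 := fun i => by
    simp [W, hB.eigenvectorBasis.sum_sq_norm_inner_left]
  have h_col : ∀ j, ∑ i, W i j ^ 2 = 1 := fun j => by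
    simp [W, hA.eigenvectorBasis.sum_sq_norm_inner_right]
  have h_couple : ∑ i, g (hA.eigenvalues i) - ∑ j, g (hB.eigenvalues j) =
      ∑ p : n × n, (g (hA.eigenvalues p.1) - g (hB.eigenvalues p.2)) * W p.1 p.2 ^ 2 := by
    simp only [sub_mul, Finset.sum_sub_distrib]
    rw [Fintype.sum_prod_type, Fintype.sum_prod_type_right]
    simp only [← Finset.mul_sum, h_row, h_col, mul_one]
  have h_cs : ∑ p : n × n, W p.1 p.2 * (|hA.eigenvalues p.1 - hB.eigenvalues p.2| * W p.1 p.2) ≤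
      √(Fintype.card n) * ‖A - B‖ := by
    refine (Real.sum_mul_le_sqrt_mul_sqrt _ _ _).trans_eq ?_
    simp only [mul_pow, sq_abs, Fintype.sum_prod_type, h_row, W, sum_sub_eigenvalues_sq_mul hA hB,
      Real.sqrt_sq (norm_nonneg (A - B)), Finset.sum_const, Finset.card_univ, nsmul_eq_mul, mul_one]
  rw [h_couple]
  refine (Finset.abs_sum_le_sum_abs _ _).trans ((Finset.sum_le_sum fun p _ => ?_).trans
    ((Finset.mul_sum _ _ _).symm.le.trans (mul_le_mul_of_nonneg_left h_cs K.2)))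
  rw [abs_mul, abs_sq]
  have h_lip := hg.dist_le_mul (hA.eigenvalues p.1) (hB.eigenvalues p.2)
  rw [Real.dist_eq, Real.dist_eq] at h_lip
  calc _ ≤ K * |hA.eigenvalues p.1 - hB.eigenvalues p.2| * W p.1 p.2 ^ 2 := by gcongr
    _ = _ := by ring

end SpectralPerturbation

/-- The continuous approximation of `1_{[t, ∞)}` rising linearly from `0` to `1` on
`[t - 1/k, t]`. -/
def ramp (t k x : ℝ) : ℝ := max 0 (min 1 (1 + k * (x - t)))

lemma ramp_mem_Icc (t k x : ℝ) : ramp t k x ∈ Set.Icc 0 1 :=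
  ⟨le_max_left _ _, max_le zero_le_one (min_le_left _ _)⟩

lemma monotone_ramp (t : ℝ) {k : ℝ} (hk : 0 ≤ k) : Monotone (ramp t k) := fun x y hxy => by
  unfold ramp
  gcongr

lemma lipschitzWith_ramp (t : ℝ) (k : ℝ) : LipschitzWith (Real.nnabs k) (ramp t k) := by
  have h_affine : LipschitzWith (Real.nnabs k) fun x : ℝ => 1 + k * (x - t) :=
    LipschitzWith.of_dist_le_mul fun x y => by
      rw [dist_add_left, Real.dist_eq, Real.dist_eq, ← mul_sub, abs_mul, sub_sub_sub_cancel_right]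
      simp
  exact (h_affine.const_min 1).const_max 0

lemma tendsto_ramp (t x : ℝ) :
    Tendsto (fun k : ℕ => ramp t k x) atTop (nhds ((Set.Ici t).indicator 1 x)) := by
  rcases le_or_gt t x with hx | hx
  · have h_one : ∀ k : ℕ, ramp t k x = 1 := fun k => by
      have : 0 ≤ (k : ℝ) * (x - t) := mul_nonneg k.cast_nonneg (sub_nonneg.2 hx)
      rw [ramp, min_eq_left (by linarith), max_eq_right zero_le_one]
    simp [h_one, hx]
  · have h_zero : ∀ᶠ k : ℕ in atTop, ramp t k x = 0 := by
      filter_upwards [(tendsto_natCast_atTop_atTop.atTop_mul_const_of_neg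
        (sub_neg.2 hx)).eventually_le_atBot (-1)] with k hk
      exact max_eq_left (min_le_of_right_le (by linarith))
    rw [Set.indicator_of_notMem (Set.notMem_Ici.2 hx)]
    exact tendsto_const_nhds.congr' (h_zero.mono fun _ h => h.symm)

theorem ext_of_integral_monotone_lipschitz {μ μ' : Measure ℝ} [IsFiniteMeasure μ]
    [IsFiniteMeasure μ'] (h : ∀ (g : ℝ → ℝ) (K : NNReal), Monotone g → LipschitzWith K g →
      (∀ x, g x ∈ Set.Icc 0 1) → ∫ x, g x ∂μ = ∫ x, g x ∂μ') : μ = μ' := by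
  have h_tendsto : ∀ (m : Measure ℝ) [IsFiniteMeasure m] (t : ℝ),
      Tendsto (fun k : ℕ => ∫ x, ramp t k x ∂m) atTop (nhds (m.real (Set.Ici t))) := by
    intro m _ t
    rw [← integral_indicator_one measurableSet_Ici]
    refine tendsto_integral_of_dominated_convergence 1
      (fun k => (lipschitzWith_ramp t k).continuous.aestronglyMeasurable) (integrable_const 1)
      (fun k => ae_of_all _ fun x => ?_) (ae_of_all _ (tendsto_ramp t))
    rw [Real.norm_of_nonneg (ramp_mem_Icc t k x).1]
    exact (ramp_mem_Icc t k x).2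
  refine Measure.ext_of_Ici μ μ' fun t => (measureReal_eq_measureReal_iff ..).1 ?_
  refine tendsto_nhds_unique (h_tendsto μ t) ((h_tendsto μ' t).congr fun k => ?_)
  exact (h _ _ (monotone_ramp t k.cast_nonneg) (lipschitzWith_ramp t k) (ramp_mem_Icc t k)).symm

section EmpiricalSpectralDistribution

open scoped Matrix.Norms.Frobenius

variable {N : ℕ} {A B : Matrix (Fin N) (Fin N) ℝ} {g : ℝ → ℝ}

lemma esdEval_of_isHermitian (hA : A.IsHermitian) (g : ℝ → ℝ) :
    esdEval A g = (N : ℝ)⁻¹ * ∑ j, g (hA.eigenvalues j) := dif_pos hA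

lemma abs_esdEval_le_one (A : Matrix (Fin N) (Fin N) ℝ) (hg : ∀ x, g x ∈ Set.Icc 0 1) :
    |esdEval A g| ≤ 1 := by
  by_cases hA : A.IsHermitian
  · have h_sum : |∑ j, g (hA.eigenvalues j)| ≤ N := by
      rw [abs_of_nonneg (Finset.sum_nonneg fun j _ => (hg _).1)]
      simpa using Finset.sum_le_sum fun j (_ : j ∈ Finset.univ) => (hg (hA.eigenvalues j)).2
    rw [esdEval_of_isHermitian hA, abs_mul, abs_of_nonneg (by positivity)]
    exact (mul_le_mul_of_nonneg_left h_sum (by positivity)).trans (inv_mul_le_one (a := (N : ℝ)))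
  · rw [esdEval, dif_neg hA]
    simp

lemma matrix_rank_smul_le {R m n : Type*} [Field R] [Fintype n] (t : R) (D : Matrix m n R) :
    (t • D).rank ≤ D.rank := by
  have h_comp : (t • D).mulVecLin = D.mulVecLin ∘ₗ (t • LinearMap.id) :=
    LinearMap.ext fun v => by simp
  rw [Matrix.rank, Matrix.rank, h_comp]
  exact Submodule.finrank_mono (LinearMap.range_comp_le_range _ _)

lemma abs_esdEval_sub_le_rank (hA : A.IsHermitian) (hB : B.IsHermitian) (hg : Monotone g)
    (hg01 : ∀ x, g x ∈ Set.Icc 0 1) :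
    |esdEval A g - esdEval B g| ≤ (A - B).rank / N := by
  have h_rank : (B - A).rank ≤ (A - B).rank := by
    simpa using matrix_rank_smul_le (-1) (A - B)
  have hAB := sum_eigenvalues_le_add_rank_mul hA hB hg hg01
  have hBA := sum_eigenvalues_le_add_rank_mul hB hA hg hg01
  rw [esdEval_of_isHermitian hA, esdEval_of_isHermitian hB, ← mul_sub, abs_mul,
    abs_of_nonneg (by positivity), ← div_eq_inv_mul]
  gcongr
  rw [abs_sub_le_iff]
  have : ((B - A).rank : ℝ) ≤ (A - B).rank := mod_cast h_rank
  constructor <;> linarith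

lemma abs_esdEval_sub_le_norm (hA : A.IsHermitian) (hB : B.IsHermitian) {K : NNReal}
    (hg : LipschitzWith K g) :
    |esdEval A g - esdEval B g| ≤ (N : ℝ)⁻¹ * (K * (√N * ‖A - B‖)) := by
  rw [esdEval_of_isHermitian hA, esdEval_of_isHermitian hB, ← mul_sub, abs_mul,
    abs_of_nonneg (by positivity)]
  gcongr
  simpa using abs_sum_eigenvalues_sub_le_of_lipschitz hA hB hg

end EmpiricalSpectralDistribution

section SymmetrizedField

open Matrix
open scoped Matrix.Norms.Frobenius

variable {N : ℕ}

/-- The matrix `W_N/√N` as a linear function of the field `x` on the `N × N` box: the entries of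
`x`, symmetrized and scaled by `1/√N`. -/
def symMatrix (N : ℕ) :
    EuclideanSpace ℝ (Fin N × Fin N) →ₗ[ℝ] Matrix (Fin N) (Fin N) ℝ where
  toFun x := (√N)⁻¹ • (of (fun i j => x (i, j)) + (of fun i j => x (i, j))ᵀ)
  map_add' x y := by
    ext
    simp only [PiLp.add_apply, Matrix.smul_apply, Matrix.add_apply, of_apply, transpose_apply,
      smul_eq_mul]
    ring
  map_smul' t x := by
    ext
    simp only [PiLp.smul_apply, Matrix.smul_apply, Matrix.add_apply, of_apply, transpose_apply,
      smul_eq_mul, RingHom.id_apply]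
    ring

lemma isHermitian_symMatrix (x : EuclideanSpace ℝ (Fin N × Fin N)) :
    (symMatrix N x).IsHermitian := by
  ext i j
  simp [symMatrix, add_comm]

lemma norm_symMatrix_le (x : EuclideanSpace ℝ (Fin N × Fin N)) :
    ‖symMatrix N x‖ ≤ (√N)⁻¹ * (2 * ‖x‖) := by
  have h_entries : ‖(of fun i j => x (i, j) : Matrix (Fin N) (Fin N) ℝ)‖ = ‖x‖ := by
    rw [← sq_eq_sq₀ (norm_nonneg _) (norm_nonneg _), frobenius_norm_sq,
      EuclideanSpace.norm_sq_eq, Fintype.sum_prod_type]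
    rfl
  change ‖(√N)⁻¹ • (of (fun i j => x (i, j)) + (of fun i j => x (i, j))ᵀ)‖ ≤ _
  rw [norm_smul, Real.norm_of_nonneg (by positivity)]
  gcongr
  refine (norm_add_le _ _).trans_eq ?_
  rw [frobenius_norm_transpose, h_entries, two_mul]

lemma matrix_rank_add_le {R m n : Type*} [Field R] [Fintype n] (C D : Matrix m n R) :
    (C + D).rank ≤ C.rank + D.rank := by
  rw [rank, rank, rank, mulVecLin_add]
  exact (Submodule.finrank_mono (LinearMap.range_add_le _ _)).trans
    (Submodule.finrank_add_le_finrank_add_finrank _ _)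

lemma rank_symMatrix_le (x : EuclideanSpace ℝ (Fin N × Fin N)) {a b c d : Fin N → ℝ}
    (hx : ∀ i j, x (i, j) = a i * b j + c i * d j) : (symMatrix N x).rank ≤ 4 := by
  have h_entries : (of fun i j => x (i, j) : Matrix (Fin N) (Fin N) ℝ) =
      vecMulVec a b + vecMulVec c d := by
    ext i j
    simp [hx, vecMulVec_apply]
  have h_rank : (of fun i j => x (i, j) : Matrix (Fin N) (Fin N) ℝ).rank ≤ 2 := by
    rw [h_entries]
    exact (matrix_rank_add_le _ _).trans
      (add_le_add (rank_vecMulVec_le a b) (rank_vecMulVec_le c d))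
  refine (matrix_rank_smul_le _ _).trans ((matrix_rank_add_le _ _).trans ?_)
  rw [rank_transpose]
  exact add_le_add h_rank h_rank

variable {g : ℝ → ℝ}

lemma lipschitzWith_esdEval_symMatrix (N : ℕ) {K : NNReal} (hg : LipschitzWith K g) :
    LipschitzWith (2 * K / N) fun x => esdEval (symMatrix N x) g :=
  LipschitzWith.of_dist_le_mul fun x y => by
    rw [Real.dist_eq, dist_eq_norm]
    calc |esdEval (symMatrix N x) g - esdEval (symMatrix N y) g|
        ≤ (N : ℝ)⁻¹ * (K * (√N * ‖symMatrix N (x - y)‖)) := by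
          rw [map_sub]
          exact abs_esdEval_sub_le_norm (isHermitian_symMatrix x) (isHermitian_symMatrix y) hg
      _ ≤ (N : ℝ)⁻¹ * (K * (√N * ((√N)⁻¹ * (2 * ‖x - y‖)))) := by
          gcongr
          exact norm_symMatrix_le _
      _ = √N * (√N)⁻¹ * (2 * K / N * ‖x - y‖) := by ring
      _ ≤ 1 * (2 * K / N * ‖x - y‖) := by
          gcongr
          exact mul_inv_le_one
      _ = _ := by simp

lemma abs_esdEval_symMatrix_add_sub_le (x y : EuclideanSpace ℝ (Fin N × Fin N))
    (hg : Monotone g) (hg01 : ∀ x, g x ∈ Set.Icc 0 1) :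
    |esdEval (symMatrix N (x + y)) g - esdEval (symMatrix N x) g| ≤
      (symMatrix N y).rank / N := by
  simpa using abs_esdEval_sub_le_rank (isHermitian_symMatrix (x + y)) (isHermitian_symMatrix x)
    hg hg01

end SymmetrizedField

section StationaryGaussian

open scoped InnerProductSpace MeasureTheory

/-- The phase `u • θ` at the site `u ∈ ℤ²` of the plane wave with frequency `θ`. -/
def phase (u : ℤ × ℤ) (θ : ℝ × ℝ) : ℝ := u.1 * θ.1 + u.2 * θ.2

lemma phase_sub (u v : ℤ × ℤ) (θ : ℝ × ℝ) : phase (u - v) θ = phase u θ - phase v θ := by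
  simp only [phase, Prod.fst_sub, Prod.snd_sub, Int.cast_sub]
  ring

@[fun_prop]
lemma continuous_phase (u : ℤ × ℤ) : Continuous (phase u) := by
  unfold phase
  fun_prop

lemma integrable_cos_phase (ρ : Measure (ℝ × ℝ)) [IsFiniteMeasure ρ] (u : ℤ × ℤ) :
    Integrable (fun θ => Real.cos (phase u θ)) ρ :=
  Integrable.of_bound (C := 1) (Continuous.aestronglyMeasurable (by fun_prop))
    (ae_of_all _ fun _ => Real.abs_cos_le_one _)

/-- The covariance function `u ↦ ∫ cos (u • θ) dρ(θ)` of the real stationary field with spectral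
measure `ρ`. -/
def spectralCov (ρ : Measure (ℝ × ℝ)) (u : ℤ × ℤ) : ℝ := ∫ θ, Real.cos (phase u θ) ∂ρ

variable {ι : Type*} (s : ι → ℤ × ℤ)

/-- The real part of the plane wave with frequency `θ`, sampled at the sites `s`. -/
def cosWave (θ : ℝ × ℝ) : EuclideanSpace ℝ ι := WithLp.toLp 2 fun p => Real.cos (phase (s p) θ)

/-- The imaginary part of the plane wave with frequency `θ`, sampled at the sites `s`. -/
def sinWave (θ : ℝ × ℝ) : EuclideanSpace ℝ ι := WithLp.toLp 2 fun p => Real.sin (phase (s p) θ)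

/-- The covariance matrix, between the sites `s`, of the stationary field with spectral measure
`ρ`. -/
def spectralCovMatrix (ρ : Measure (ℝ × ℝ)) : Matrix ι ι ℝ :=
  Matrix.of fun p q => spectralCov ρ (s p - s q)

variable [Fintype ι]

/-- The squared modulus `|∑ c_p e^{i s_p • θ}|²` of the trigonometric polynomial with
coefficients `c` at the sites `s`. -/
def waveEnergy (c : EuclideanSpace ℝ ι) (θ : ℝ × ℝ) : ℝ :=
  ⟪cosWave s θ, c⟫_ℝ ^ 2 + ⟪sinWave s θ, c⟫_ℝ ^ 2

/-- The law, at the sites `s`, of the centered stationary Gaussian field with spectral measure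
`ρ`. -/
def stationaryGaussian [DecidableEq ι] (ρ : Measure (ℝ × ℝ)) : Measure (EuclideanSpace ℝ ι) :=
  multivariateGaussian 0 (spectralCovMatrix s ρ)

instance [DecidableEq ι] (ρ : Measure (ℝ × ℝ)) :
    IsProbabilityMeasure (stationaryGaussian s ρ) := by
  unfold stationaryGaussian
  infer_instance

lemma memLp_norm_stationaryGaussian [DecidableEq ι] (ρ : Measure (ℝ × ℝ)) :
    MemLp (fun x => ‖x‖) 2 (stationaryGaussian s ρ) :=
  (IsGaussian.memLp_two_id (μ := multivariateGaussian 0 (spectralCovMatrix s ρ))).norm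

lemma waveEnergy_eq_sum (c : EuclideanSpace ℝ ι) (θ : ℝ × ℝ) :
    waveEnergy s c θ = ∑ p, ∑ q, c p * c q * Real.cos (phase (s p - s q) θ) := by
  simp only [waveEnergy, cosWave, sinWave, PiLp.inner_apply, RCLike.inner_apply, conj_trivial, sq,
    Finset.sum_mul_sum, ← Finset.sum_add_distrib, phase_sub, Real.cos_sub]
  exact Finset.sum_congr rfl fun p _ => Finset.sum_congr rfl fun q _ => by ring

variable (ρ ρ' : Measure (ℝ × ℝ)) [IsFiniteMeasure ρ] [IsFiniteMeasure ρ']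

lemma integrable_waveEnergy (c : EuclideanSpace ℝ ι) : Integrable (waveEnergy s c) ρ := by
  rw [funext (waveEnergy_eq_sum s c)]
  exact integrable_finsetSum _ fun p _ => integrable_finsetSum _ fun q _ =>
    (integrable_cos_phase ρ _).const_mul _

lemma integral_waveEnergy (c : EuclideanSpace ℝ ι) :
    ∫ θ, waveEnergy s c θ ∂ρ = ∑ p, ∑ q, c p * c q * spectralCov ρ (s p - s q) := by
  have h_int : ∀ p q, Integrable (fun θ => c p * c q * Real.cos (phase (s p - s q) θ)) ρ :=
    fun p q => (integrable_cos_phase ρ _).const_mul _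
  simp only [waveEnergy_eq_sum]
  rw [integral_finsetSum _ fun p _ => integrable_finsetSum _ fun q _ => h_int p q]
  refine Finset.sum_congr rfl fun p _ => ?_
  rw [integral_finsetSum _ fun q _ => h_int p q]
  exact Finset.sum_congr rfl fun q _ => integral_const_mul _ _

lemma dotProduct_spectralCovMatrix_mulVec (c : EuclideanSpace ℝ ι) :
    c.ofLp ⬝ᵥ (spectralCovMatrix s ρ).mulVec c.ofLp = ∫ θ, waveEnergy s c θ ∂ρ := by
  rw [integral_waveEnergy]
  simp only [dotProduct, Matrix.mulVec, spectralCovMatrix, Matrix.of_apply, Finset.mul_sum]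
  exact Finset.sum_congr rfl fun p _ => Finset.sum_congr rfl fun q _ => by ring

omit [Fintype ι] in
lemma posSemidef_spectralCovMatrix [Finite ι] : (spectralCovMatrix s ρ).PosSemidef := by
  cases nonempty_fintype ι
  refine .of_dotProduct_mulVec_nonneg ?_ fun x => ?_
  · ext p q
    simp only [spectralCovMatrix, Matrix.conjTranspose_apply, Matrix.of_apply, star_trivial,
      spectralCov, phase_sub]
    simp_rw [← Real.cos_neg (phase (s q) _ - phase (s p) _), neg_sub]
  · rw [star_trivial, dotProduct_spectralCovMatrix_mulVec s ρ (WithLp.toLp 2 x)]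
    exact integral_nonneg fun θ => add_nonneg (sq_nonneg _) (sq_nonneg _)

variable [DecidableEq ι]

lemma charFun_stationaryGaussian (c : EuclideanSpace ℝ ι) :
    charFun (stationaryGaussian s ρ) c =
      Complex.exp (-((∫ θ, waveEnergy s c θ ∂ρ : ℝ) : ℂ) / 2) := by
  rw [stationaryGaussian, charFun_multivariateGaussian (posSemidef_spectralCovMatrix s ρ),
    dotProduct_spectralCovMatrix_mulVec]
  simp [neg_div]

theorem stationaryGaussian_conv :
    stationaryGaussian s ρ ∗ stationaryGaussian s ρ' = stationaryGaussian s (ρ + ρ') := by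
  refine Measure.ext_of_charFun (funext fun c => ?_)
  rw [charFun_conv, charFun_stationaryGaussian, charFun_stationaryGaussian,
    charFun_stationaryGaussian, ← Complex.exp_add,
    integral_add_measure (integrable_waveEnergy s ρ c) (integrable_waveEnergy s ρ' c)]
  push_cast
  ring_nf

lemma stationaryGaussian_zero : stationaryGaussian s 0 = Measure.dirac 0 :=
  Measure.ext_of_charFun (funext fun c => by rw [charFun_stationaryGaussian]; simp)

lemma charFun_gaussianReal_map_smul {E : Type*} [NormedAddCommGroup E] [InnerProductSpace ℝ E]
    [MeasurableSpace E] [BorelSpace E] (w : NNReal) (v c : E) :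
    charFun ((gaussianReal 0 w).map (· • v)) c =
      Complex.exp (-(w * (⟪v, c⟫_ℝ ^ 2 : ℝ) : ℂ) / 2) := by
  rw [charFun_apply, integral_map (by fun_prop) (by fun_prop)]
  simp_rw [inner_smul_left, conj_trivial, mul_comm _ ⟪v, c⟫_ℝ]
  have := charFun_gaussianReal (μ := 0) (v := w) ⟪v, c⟫_ℝ
  rw [charFun_apply_real] at this
  push_cast at this ⊢
  rw [this]
  congr 1
  ring

theorem stationaryGaussian_smul_dirac (w : NNReal) (θ : ℝ × ℝ) :
    stationaryGaussian s (w • Measure.dirac θ) =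
      (gaussianReal 0 w).map (· • cosWave s θ) ∗ (gaussianReal 0 w).map (· • sinWave s θ) := by
  refine Measure.ext_of_charFun (funext fun c => ?_)
  rw [charFun_conv, charFun_gaussianReal_map_smul, charFun_gaussianReal_map_smul,
    charFun_stationaryGaussian, ← Complex.exp_add, integral_smul_nnreal_measure, integral_dirac,
    waveEnergy, NNReal.smul_def, smul_eq_mul]
  push_cast
  ring_nf

lemma integral_sq_gaussianReal (v : NNReal) : ∫ x, x ^ 2 ∂(gaussianReal 0 v) = v := by
  rw [← variance_id_gaussianReal (μ := 0), variance_of_integral_eq_zero (by fun_prop) (by simp)]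
  rfl

lemma measurePreserving_eval_stationaryGaussian (p : ι) :
    MeasurePreserving (fun x : EuclideanSpace ℝ ι => x p) (stationaryGaussian s ρ)
      (gaussianReal 0 (ρ.real Set.univ).toNNReal) := by
  have h_diag : spectralCovMatrix s ρ p p = ρ.real Set.univ := by
    simp [spectralCovMatrix, spectralCov, phase]
  simpa [h_diag, stationaryGaussian] using measurePreserving_eval_multivariateGaussian (μ := 0)
    (posSemidef_spectralCovMatrix s ρ) (i := p)

lemma integral_norm_sq_stationaryGaussian :
    ∫ x, ‖x‖ ^ 2 ∂(stationaryGaussian s ρ) = Fintype.card ι * ρ.real Set.univ := by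
  have h_coord := measurePreserving_eval_stationaryGaussian s ρ
  have h_int : ∀ p, Integrable (fun x : EuclideanSpace ℝ ι => x p ^ 2) (stationaryGaussian s ρ) :=
    fun p => ((memLp_id_gaussianReal 2).comp_measurePreserving (h_coord p)).integrable_sq
  have h_sq : ∀ p, ∫ x : EuclideanSpace ℝ ι, x p ^ 2 ∂(stationaryGaussian s ρ) =
      ρ.real Set.univ := fun p => by
    have h_map := integral_map (μ := stationaryGaussian s ρ)
      (f := fun y : ℝ => y ^ 2) (h_coord p).measurable.aemeasurable
      (by fun_prop)
    rw [← h_map, (h_coord p).map_eq, integral_sq_gaussianReal,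
      Real.coe_toNNReal _ measureReal_nonneg]
  simp_rw [EuclideanSpace.real_norm_sq_eq]
  rw [integral_finsetSum _ fun p _ => h_int p]
  simp [h_sq]

lemma integral_norm_stationaryGaussian_le :
    ∫ x, ‖x‖ ∂(stationaryGaussian s ρ) ≤ √(Fintype.card ι * ρ.real Set.univ) := by
  refine Real.le_sqrt_of_sq_le ?_
  have h_var := variance_nonneg (fun x => ‖x‖) (stationaryGaussian s ρ)
  rw [variance_eq_sub (memLp_norm_stationaryGaussian s ρ), sub_nonneg] at h_var
  exact h_var.trans_eq (integral_norm_sq_stationaryGaussian s ρ)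

end StationaryGaussian

section SpectralMeasure

open scoped InnerProductSpace

variable {Ω ι : Type*} (s : ι → ℤ × ℤ) {X : ℤ → ℤ → Ω → ℝ}

/-- The restriction of the field `X` to the sites `s`. -/
def sampleField (X : ℤ → ℤ → Ω → ℝ) (ω : Ω) : EuclideanSpace ℝ ι :=
  WithLp.toLp 2 fun p => X (s p).1 (s p).2 ω

lemma inner_sampleField [Fintype ι] (c : EuclideanSpace ℝ ι) (ω : Ω) :
    ⟪c, sampleField s X ω⟫_ℝ = ∑ p, c p * X (s p).1 (s p).2 ω := by
  simp [sampleField, PiLp.inner_apply, mul_comm]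

variable [MeasurableSpace Ω] {P : Measure Ω}

/-- `ν` is the spectral measure of the field `X`: its Fourier coefficients are the covariances
of `X`. -/
def HasSpectralMeasure (P : Measure Ω) (X : ℤ → ℤ → Ω → ℝ) (ν : Measure (ℝ × ℝ)) : Prop :=
  ∀ u v : ℤ, (∫ q, Complex.exp (Complex.I * ((u * q.1 + v * q.2 : ℝ) : ℂ)) ∂ν)
    = ((∫ ω, X 0 0 ω * X u v ω ∂P : ℝ) : ℂ)

lemma HasSpectralMeasure.spectralCov_eq {ν : Measure (ℝ × ℝ)} [IsFiniteMeasure ν]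
    (hν : HasSpectralMeasure P X ν) (u : ℤ × ℤ) :
    spectralCov ν u = ∫ ω, X 0 0 ω * X u.1 u.2 ω ∂P := by
  have h_int : Integrable (fun θ => Complex.exp (Complex.I * (phase u θ : ℂ))) ν :=
    Integrable.of_bound (C := 1) (Continuous.aestronglyMeasurable (by fun_prop))
      (ae_of_all _ fun θ => by rw [mul_comm, Complex.norm_exp_ofReal_mul_I])
  have h_re := congrArg Complex.re (hν u.1 u.2)
  rw [Complex.ofReal_re] at h_re
  calc spectralCov ν u = ∫ θ, (Complex.exp (Complex.I * (phase u θ : ℂ))).re ∂ν := by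
        simp only [spectralCov, mul_comm Complex.I, Complex.exp_ofReal_mul_I_re]
    _ = (∫ θ, Complex.exp (Complex.I * (phase u θ : ℂ)) ∂ν).re :=
        Complex.reCLM.integral_comp_comm h_int
    _ = _ := h_re

lemma StatGauss.integral_mul (hX : StatGauss P X) (a b : ℤ × ℤ) :
    ∫ ω, X a.1 a.2 ω * X b.1 b.2 ω ∂P = ∫ ω, X 0 0 ω * X (b - a).1 (b - a).2 ω ∂P := by
  simpa using hX.stat a.1 a.2 (b - a).1 (b - a).2

lemma StatGauss.memLp_two (hX : StatGauss P X) (j k : ℤ) : MemLp (X j k) 2 P := by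
  obtain ⟨v, hv⟩ := hX.gauss (Finsupp.single (j, k) 1)
  have h_law : P.map (X j k) = gaussianReal 0 v := by
    rw [← hv]
    simp [Finsupp.support_single]
  rw [← Function.id_comp (X j k),
    ← memLp_map_measure_iff (by fun_prop) (hX.meas j k).aemeasurable, h_law]
  exact memLp_id_gaussianReal 2

lemma StatGauss.measurable_sampleField (hX : StatGauss P X) : Measurable (sampleField s X) := by
  have : ∀ p, Measurable (X (s p).1 (s p).2) := fun p => hX.meas _ _
  unfold sampleField
  fun_prop

variable [Fintype ι] (c : EuclideanSpace ℝ ι)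

lemma StatGauss.exists_map_inner_sampleField (hX : StatGauss P X) :
    ∃ v, P.map (fun ω => ⟪c, sampleField s X ω⟫_ℝ) = gaussianReal 0 v := by
  obtain ⟨v, hv⟩ := hX.gauss (∑ p, Finsupp.single (s p) (c p))
  refine ⟨v, hv ▸ congrArg P.map (funext fun ω => ?_)⟩
  have h_sum := Finsupp.sum_finsetSum_index (s := Finset.univ)
    (g := fun p => Finsupp.single (s p) (c p)) (h := fun r t => t * X r.1 r.2 ω)
    (fun _ => zero_mul _) (fun _ _ _ => add_mul _ _ _)
  simp only [Finsupp.sum_single_index, zero_mul] at h_sum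
  rw [inner_sampleField, h_sum]
  rfl

variable {ν : Measure (ℝ × ℝ)} [IsFiniteMeasure ν]

lemma StatGauss.integral_inner_sampleField_sq (hX : StatGauss P X)
    (hν : HasSpectralMeasure P X ν) :
    ∫ ω, ⟪c, sampleField s X ω⟫_ℝ ^ 2 ∂P = ∫ θ, waveEnergy s c θ ∂ν := by
  have h_int : ∀ p q, Integrable (fun ω => c p * c q *
      (X (s q).1 (s q).2 ω * X (s p).1 (s p).2 ω)) P := fun p q =>
    ((hX.memLp_two _ _).integrable_mul (hX.memLp_two _ _)).const_mul _
  have h_sq : ∀ ω, ⟪c, sampleField s X ω⟫_ℝ ^ 2 =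
      ∑ p, ∑ q, c p * c q * (X (s q).1 (s q).2 ω * X (s p).1 (s p).2 ω) := fun ω => by
    rw [inner_sampleField, sq, Finset.sum_mul_sum]
    exact Finset.sum_congr rfl fun p _ => Finset.sum_congr rfl fun q _ => by ring
  simp_rw [h_sq]
  rw [integral_waveEnergy, integral_finsetSum _ fun p _ => integrable_finsetSum _ fun q _ =>
    h_int p q]
  refine Finset.sum_congr rfl fun p _ => ?_
  rw [integral_finsetSum _ fun q _ => h_int p q]
  refine Finset.sum_congr rfl fun q _ => ?_
  rw [integral_const_mul, hX.integral_mul, hν.spectralCov_eq]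

theorem StatGauss.map_sampleField [DecidableEq ι] [IsFiniteMeasure P] (hX : StatGauss P X)
    (hν : HasSpectralMeasure P X ν) : P.map (sampleField s X) = stationaryGaussian s ν := by
  refine Measure.ext_of_charFun (funext fun c => ?_)
  obtain ⟨v, hv⟩ := hX.exists_map_inner_sampleField s c
  have h_meas := hX.measurable_sampleField s
  have h_inner : Measurable fun ω => ⟪c, sampleField s X ω⟫_ℝ := by fun_prop
  have h_var : (v : ℝ) = ∫ θ, waveEnergy s c θ ∂ν := by
    rw [← hX.integral_inner_sampleField_sq s c hν, ← integral_sq_gaussianReal, ← hv,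
      integral_map h_inner.aemeasurable (by fun_prop)]
  have h_proj : charFun (P.map (sampleField s X)) c =
      charFun (P.map fun ω => ⟪c, sampleField s X ω⟫_ℝ) 1 := by
    rw [charFun_apply, charFun_apply, integral_map h_meas.aemeasurable (by fun_prop),
      integral_map h_inner.aemeasurable (by fun_prop)]
    simp [real_inner_comm]
  rw [h_proj, hv, charFun_gaussianReal, charFun_stationaryGaussian, ← h_var]
  simp [neg_div]

end SpectralMeasure

section ConvolutionStability

open scoped MeasureTheory

variable {E : Type*} [MeasurableSpace E] [AddMonoid E]

/-- Adding an independent `γ`-distributed perturbation to a random variable changes the expectation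
of `F` by at most `δ`, whatever the law `m` of that variable. -/
def ConvStable (F : E → ℝ) (γ : Measure E) (δ : ℝ) : Prop :=
  ∀ m : Measure E, IsProbabilityMeasure m → |∫ x, F x ∂(m ∗ γ) - ∫ x, F x ∂m| ≤ δ

lemma ConvStable.mono {F : E → ℝ} {γ : Measure E} {δ δ' : ℝ} (h : ConvStable F γ δ)
    (hδ : δ ≤ δ') : ConvStable F γ δ' := fun m hm => (h m hm).trans hδ

variable [MeasurableAdd₂ E] {F : E → ℝ} {γ γ' : Measure E} {δ δ' : ℝ}

lemma ConvStable.conv [IsProbabilityMeasure γ] [SFinite γ'] (h : ConvStable F γ δ)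
    (h' : ConvStable F γ' δ') : ConvStable F (γ ∗ γ') (δ + δ') := fun m _ => by
  rw [← Measure.conv_assoc]
  calc |∫ x, F x ∂((m ∗ γ) ∗ γ') - ∫ x, F x ∂m|
      ≤ |∫ x, F x ∂((m ∗ γ) ∗ γ') - ∫ x, F x ∂(m ∗ γ)| + |∫ x, F x ∂(m ∗ γ) - ∫ x, F x ∂m| :=
        abs_sub_le _ _ _
    _ ≤ δ' + δ := add_le_add (h' (m ∗ γ) inferInstance) (h m inferInstance)
    _ = δ + δ' := add_comm _ _

lemma ConvStable.of_ae_abs_sub_le [IsProbabilityMeasure γ] {M : ℝ} {b : E → ℝ}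
    (hF : Measurable F) (hFM : ∀ x, |F x| ≤ M) (hb : Integrable b γ)
    (h : ∀ x, ∀ᵐ y ∂γ, |F (x + y) - F x| ≤ b y) : ConvStable F γ (∫ y, b y ∂γ) := fun m _ => by
  have h_integrable : ∀ {α : Type _} [MeasurableSpace α] (ρ : Measure α) [IsFiniteMeasure ρ]
      {φ : α → E}, Measurable φ → Integrable (fun a => F (φ a)) ρ := fun ρ _ φ hφ =>
    Integrable.of_bound (hF.comp hφ).aestronglyMeasurable M (ae_of_all _ fun a => hFM _)
  have h_add : Integrable (fun z : E × E => F (z.1 + z.2)) (m.prod γ) :=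
    h_integrable _ measurable_add
  have h_inner : ∀ x, |∫ y, F (x + y) ∂γ - F x| ≤ ∫ y, b y ∂γ := fun x => by
    have h_diff : ∫ y, F (x + y) ∂γ - F x = ∫ y, (F (x + y) - F x) ∂γ := by
      rw [integral_sub (h_integrable γ (measurable_const_add x)) (integrable_const _)]
      simp
    rw [h_diff]
    exact norm_integral_le_of_norm_le (f := fun y => F (x + y) - F x) hb (h x)
  rw [integral_conv (h_integrable (m ∗ γ) (φ := fun x => x) measurable_id),
    ← integral_sub h_add.integral_prod_left (h_integrable m (φ := fun x => x) measurable_id)]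
  simpa using norm_integral_le_of_norm_le (μ := m)
    (f := fun x => ∫ y, F (x + y) ∂γ - F x) (integrable_const _) (ae_of_all _ h_inner)

end ConvolutionStability

section DiscreteSpectrum

open scoped MeasureTheory

/-- The sites `(i, j)`, `1 ≤ i, j ≤ N`. -/
def boxSite (N : ℕ) (p : Fin N × Fin N) : ℤ × ℤ := ((p.1 : ℕ) + 1, (p.2 : ℕ) + 1)

lemma symMatrix_sampleField {Ω : Type*} (X : ℤ → ℤ → Ω → ℝ) (N : ℕ) (ω : Ω) :
    symMatrix N (sampleField (boxSite N) X ω) = scaledW X N ω := rfl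

lemma rank_symMatrix_cosWave_le (N : ℕ) (θ : ℝ × ℝ) :
    (symMatrix N (cosWave (boxSite N) θ)).rank ≤ 4 :=
  rank_symMatrix_le _ (a := fun i => Real.cos ((i + 1) * θ.1))
    (b := fun j => Real.cos ((j + 1) * θ.2)) (c := fun i => -Real.sin ((i + 1) * θ.1))
    (d := fun j => Real.sin ((j + 1) * θ.2)) fun i j => by
      simp only [cosWave, phase, boxSite, Int.cast_add, Int.cast_natCast, Int.cast_one,
        Real.cos_add, neg_mul]
      ring

lemma rank_symMatrix_sinWave_le (N : ℕ) (θ : ℝ × ℝ) :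
    (symMatrix N (sinWave (boxSite N) θ)).rank ≤ 4 :=
  rank_symMatrix_le _ (a := fun i => Real.sin ((i + 1) * θ.1))
    (b := fun j => Real.cos ((j + 1) * θ.2)) (c := fun i => Real.cos ((i + 1) * θ.1))
    (d := fun j => Real.sin ((j + 1) * θ.2)) fun i j => by
      simp [sinWave, phase, boxSite, Real.sin_add]

lemma exists_finset_measureReal_compl_lt {α : Type*} [MeasurableSpace α]
    [MeasurableSingletonClass α] (ρ : Measure α) [IsFiniteMeasure ρ] {s : Set α}
    (hs : s.Countable) (hρ : ρ sᶜ = 0) {ε : ℝ} (hε : 0 < ε) :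
    ∃ t : Finset α, ρ.real (t : Set α)ᶜ < ε := by
  have := hs.to_subtype
  let t : Finset s → Finset α := Finset.map (Function.Embedding.subtype _)
  have h_tendsto : Tendsto (fun F => ρ (t F : Set α)ᶜ) atTop (nhds (ρ (⋂ F, (t F : Set α)ᶜ))) :=
    tendsto_measure_iInter_atTop (fun F => (t F).measurableSet.compl.nullMeasurableSet)
      (fun F G hFG => Set.compl_subset_compl.2 (Finset.coe_subset.2 (Finset.map_subset_map.2 hFG)))
      ⟨∅, measure_ne_top _ _⟩
  have h_subset : ⋂ F, (t F : Set α)ᶜ ⊆ sᶜ := fun x hx hxs =>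
    Set.mem_iInter.1 hx {⟨x, hxs⟩} (by simp [t])
  rw [measure_mono_null h_subset hρ] at h_tendsto
  obtain ⟨F, hF⟩ := (h_tendsto.eventually (gt_mem_nhds (ENNReal.ofReal_pos.2 hε))).exists
  exact ⟨t F, ENNReal.toReal_lt_of_lt_ofReal hF⟩

variable {g : ℝ → ℝ} {K : NNReal}

lemma measurable_esdEval_symMatrix (N : ℕ) (hgK : LipschitzWith K g) :
    Measurable fun x => esdEval (symMatrix N x) g :=
  (lipschitzWith_esdEval_symMatrix N hgK).continuous.measurable

variable (N : ℕ) (hgK : LipschitzWith K g) (hg01 : ∀ x, g x ∈ Set.Icc 0 1)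

include hgK hg01

lemma convStable_stationaryGaussian_of_lipschitz (ρ : Measure (ℝ × ℝ)) [IsFiniteMeasure ρ] :
    ConvStable (fun x => esdEval (symMatrix N x) g) (stationaryGaussian (boxSite N) ρ)
      (2 * K * √(ρ.real Set.univ)) := by
  have h_lip : ∀ x y, |esdEval (symMatrix N (x + y)) g - esdEval (symMatrix N x) g| ≤
      2 * K / N * ‖y‖ := fun x y => by
    simpa [Real.dist_eq] using
      (lipschitzWith_esdEval_symMatrix N hgK).dist_le_mul (x + y) x
  refine (ConvStable.of_ae_abs_sub_le (measurable_esdEval_symMatrix N hgK)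
    (fun x => abs_esdEval_le_one _ hg01)
    (((memLp_norm_stationaryGaussian _ ρ).integrable one_le_two).const_mul _)
    fun x => ae_of_all _ (h_lip x)).mono ?_
  rw [integral_const_mul]
  calc 2 * K / N * ∫ y, ‖y‖ ∂stationaryGaussian (boxSite N) ρ
      ≤ 2 * K / N * √(Fintype.card (Fin N × Fin N) * ρ.real Set.univ) := by
        gcongr
        exact integral_norm_stationaryGaussian_le _ ρ
    _ = N * (N : ℝ)⁻¹ * (2 * K * √(ρ.real Set.univ)) := by
        rw [Fintype.card_prod, Fintype.card_fin, Nat.cast_mul, Real.sqrt_mul (by positivity),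
          Real.sqrt_mul_self N.cast_nonneg]
        ring
    _ ≤ 1 * (2 * K * √(ρ.real Set.univ)) := by
        gcongr
        exact mul_inv_le_one
    _ = _ := one_mul _

variable (hg : Monotone g)

include hg

lemma convStable_map_smul {r : ℕ} {v : EuclideanSpace ℝ (Fin N × Fin N)}
    (hv : (symMatrix N v).rank ≤ r) (m : Measure ℝ) [IsProbabilityMeasure m] :
    ConvStable (fun x => esdEval (symMatrix N x) g) (m.map (· • v)) (r / N) := by
  have h_meas := measurable_esdEval_symMatrix N hgK
  have h_smul : Measurable (· • v : ℝ → EuclideanSpace ℝ (Fin N × Fin N)) := by fun_prop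
  have := Measure.isProbabilityMeasure_map (μ := m) h_smul.aemeasurable
  refine (ConvStable.of_ae_abs_sub_le (b := fun _ => (r : ℝ) / N) h_meas
    (fun x => abs_esdEval_le_one _ hg01) (integrable_const _) fun x => ?_).mono (by simp)
  have h_abs : Measurable fun y =>
      |esdEval (symMatrix N (x + y)) g - esdEval (symMatrix N x) g| :=
    ((h_meas.comp (measurable_const_add x)).sub_const _).abs
  rw [ae_map_iff h_smul.aemeasurable (measurableSet_le h_abs measurable_const)]
  refine ae_of_all _ fun t => (abs_esdEval_symMatrix_add_sub_le x (t • v) hg hg01).trans ?_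
  gcongr
  rw [map_smul]
  exact (matrix_rank_smul_le t _).trans hv

lemma convStable_stationaryGaussian_smul_dirac (w : NNReal) (θ : ℝ × ℝ) :
    ConvStable (fun x => esdEval (symMatrix N x) g)
      (stationaryGaussian (boxSite N) (w • Measure.dirac θ)) (8 / N) := by
  have := Measure.isProbabilityMeasure_map (μ := gaussianReal 0 w)
    (f := (· • cosWave (boxSite N) θ)) (by fun_prop)
  rw [stationaryGaussian_smul_dirac]
  refine ((convStable_map_smul N hgK hg01 hg (rank_symMatrix_cosWave_le N θ) _).conv
    (convStable_map_smul N hgK hg01 hg (rank_symMatrix_sinWave_le N θ) _)).mono (le_of_eq ?_)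
  push_cast
  ring

lemma convStable_stationaryGaussian_restrict_finset (ρ : Measure (ℝ × ℝ)) [IsFiniteMeasure ρ]
    (t : Finset (ℝ × ℝ)) :
    ConvStable (fun x => esdEval (symMatrix N x) g)
      (stationaryGaussian (boxSite N) (ρ.restrict t)) (t.card * (8 / N)) := by
  classical
  induction t using Finset.induction_on with
  | empty =>
    intro m _
    simp [stationaryGaussian_zero]
  | insert θ t hθ ih =>
    have h_split : ρ.restrict (insert θ t : Finset (ℝ × ℝ)) =
        (ρ {θ}).toNNReal • Measure.dirac θ + ρ.restrict t := by
      have h_atom : (ρ {θ}).toNNReal • Measure.dirac θ = ρ.restrict {θ} := by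
        rw [Measure.restrict_singleton, ← ENNReal.coe_toNNReal (measure_ne_top ρ {θ})]
        rfl
      rw [h_atom, Finset.coe_insert, Set.insert_eq,
        Measure.restrict_union (by simpa using hθ) t.measurableSet]
    rw [h_split, ← stationaryGaussian_conv]
    refine ((convStable_stationaryGaussian_smul_dirac N hgK hg01 hg _ θ).conv ih).mono
      (le_of_eq ?_)
    rw [Finset.card_insert_of_notMem hθ]
    push_cast
    ring

lemma eventually_convStable_stationaryGaussian (ρ : Measure (ℝ × ℝ)) [IsFiniteMeasure ρ]
    {s : Set (ℝ × ℝ)} (hs : s.Countable) (hρ : ρ sᶜ = 0) {ε : ℝ} (hε : 0 < ε) :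
    ∀ᶠ N : ℕ in atTop, ConvStable (fun x => esdEval (symMatrix N x) g)
      (stationaryGaussian (boxSite N) ρ) ε := by
  obtain ⟨t, ht⟩ := exists_finset_measureReal_compl_lt ρ hs hρ
    (by positivity : 0 < (ε / (4 * (K + 1))) ^ 2)
  have h_tail : 2 * K * √((ρ.restrict (t : Set (ℝ × ℝ))ᶜ).real Set.univ) ≤ ε / 2 := by
    rw [measureReal_restrict_apply_univ]
    calc 2 * K * √(ρ.real (t : Set (ℝ × ℝ))ᶜ) ≤ 2 * K * (ε / (4 * (K + 1))) := by
          gcongr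
          exact Real.sqrt_le_iff.2 ⟨by positivity, ht.le⟩
      _ = ε / 2 * (K / (K + 1)) := by field_simp; ring
      _ ≤ ε / 2 * 1 := by
          gcongr
          exact div_le_one_of_le₀ (by linarith) (by positivity)
      _ = ε / 2 := mul_one _
  have h_atoms : Tendsto (fun N : ℕ => (t.card : ℝ) * (8 / N)) atTop (nhds 0) := by
    simpa using (tendsto_const_div_atTop_nhds_zero_nat 8).const_mul (t.card : ℝ)
  filter_upwards [h_atoms.eventually_le_const (half_pos hε)] with N hN
  rw [← Measure.restrict_add_restrict_compl (μ := ρ) t.measurableSet, ← stationaryGaussian_conv]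
  refine ((convStable_stationaryGaussian_restrict_finset N hgK hg01 hg ρ t).conv
    (convStable_stationaryGaussian_of_lipschitz N hgK hg01 _)).mono ?_
  linarith

theorem tendsto_integral_esdEval_add (ν ρ : Measure (ℝ × ℝ)) [IsFiniteMeasure ν]
    [IsFiniteMeasure ρ] {s : Set (ℝ × ℝ)} (hs : s.Countable) (hρ : ρ sᶜ = 0) {L : ℝ}
    (hν : Tendsto (fun N : ℕ => ∫ x, esdEval (symMatrix N x) g ∂stationaryGaussian (boxSite N) ν)
      atTop (nhds L)) :
    Tendsto (fun N : ℕ => ∫ x, esdEval (symMatrix N x) g ∂stationaryGaussian (boxSite N) (ν + ρ))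
      atTop (nhds L) := by
  have h_diff : Tendsto (fun N : ℕ =>
      ∫ x, esdEval (symMatrix N x) g ∂stationaryGaussian (boxSite N) (ν + ρ) -
        ∫ x, esdEval (symMatrix N x) g ∂stationaryGaussian (boxSite N) ν) atTop (nhds 0) := by
    rw [Metric.tendsto_nhds]
    intro ε hε
    filter_upwards [eventually_convStable_stationaryGaussian hgK hg01 hg ρ hs hρ (half_pos hε)]
      with N hN
    rw [Real.dist_eq, sub_zero, ← stationaryGaussian_conv]
    exact (hN _ inferInstance).trans_lt (half_lt_self hε)
  simpa using hν.add h_diff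

end DiscreteSpectrum

lemma tendsto_integral_of_tendstoInMeasure_const {Ω : Type*} [MeasurableSpace Ω] {P : Measure Ω}
    [IsProbabilityMeasure P] {Z : ℕ → Ω → ℝ} {M L : ℝ} (hZ : ∀ n, Measurable (Z n))
    (hZM : ∀ n ω, |Z n ω| ≤ M) (h : TendstoInMeasure P Z atTop fun _ => L) :
    Tendsto (fun n => ∫ ω, Z n ω ∂P) atTop (nhds L) := by
  refine tendsto_of_subseq_tendsto fun ns hns => ?_
  obtain ⟨ms, -, hms⟩ := (h.comp hns).exists_seq_tendsto_ae
  refine ⟨ms, ?_⟩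
  simpa using tendsto_integral_of_dominated_convergence (fun _ => M)
    (fun n => (hZ (ns (ms n))).aestronglyMeasurable) (integrable_const M)
    (fun n => ae_of_all _ (hZM _)) hms

lemma ESDTendstoInProb.tendsto_integral_esdEval {Ω : Type*} [MeasurableSpace Ω] {P : Measure Ω}
    [IsProbabilityMeasure P] {X : ℤ → ℤ → Ω → ℝ} {ν : Measure (ℝ × ℝ)} [IsFiniteMeasure ν]
    {μ : Measure ℝ} (h : ESDTendstoInProb P (scaledW X) μ) (hX : StatGauss P X)
    (hν : HasSpectralMeasure P X ν) {g : ℝ → ℝ} {K : NNReal} (hgK : LipschitzWith K g)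
    (hg01 : ∀ x, g x ∈ Set.Icc 0 1) :
    Tendsto (fun N : ℕ => ∫ x, esdEval (symMatrix N x) g ∂stationaryGaussian (boxSite N) ν)
      atTop (nhds (∫ x, g x ∂μ)) := by
  have h_bound : ∀ x, |g x| ≤ 1 := fun x => abs_le.2 ⟨by linarith [(hg01 x).1], (hg01 x).2⟩
  have h_law : ∀ N : ℕ, ∫ x, esdEval (symMatrix N x) g ∂stationaryGaussian (boxSite N) ν =
      ∫ ω, esdEval (scaledW X N ω) g ∂P := fun N => by
    rw [← hX.map_sampleField _ hν, integral_map (hX.measurable_sampleField _).aemeasurable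
      (measurable_esdEval_symMatrix N hgK).aestronglyMeasurable]
    simp_rw [symMatrix_sampleField]
  simp_rw [h_law]
  refine tendsto_integral_of_tendstoInMeasure_const
    (fun N => (measurable_esdEval_symMatrix N hgK).comp (hX.measurable_sampleField (boxSite N)))
    (fun N ω => abs_esdEval_le_one _ hg01) ?_
  exact tendstoInMeasure_iff_norm.2 (h g hgK.continuous ⟨1, h_bound⟩)

theorem statement1_general {Ω Ω' : Type*} [MeasurableSpace Ω] [MeasurableSpace Ω']
    {P : Measure Ω} {P' : Measure Ω'} [IsProbabilityMeasure P] [IsProbabilityMeasure P']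
    {X : ℤ → ℤ → Ω → ℝ} {X' : ℤ → ℤ → Ω' → ℝ} (hX : StatGauss P X) (hX' : StatGauss P' X')
    {ν ν' κ νd νd' : Measure (ℝ × ℝ)} [IsFiniteMeasure ν] [IsFiniteMeasure ν']
    (hν : HasSpectralMeasure P X ν) (hν' : HasSpectralMeasure P' X' ν')
    (hν_add : ν = κ + νd) (hν'_add : ν' = κ + νd')
    (hνd : ∃ s : Set (ℝ × ℝ), s.Countable ∧ νd sᶜ = 0)
    (hνd' : ∃ s : Set (ℝ × ℝ), s.Countable ∧ νd' sᶜ = 0)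
    {μ μ' : Measure ℝ} [IsFiniteMeasure μ] [IsFiniteMeasure μ']
    (h : ESDTendstoInProb P (scaledW X) μ) (h' : ESDTendstoInProb P' (scaledW X') μ') :
    μ = μ' := by
  obtain ⟨s, hs, hs0⟩ := hνd
  obtain ⟨s', hs', hs0'⟩ := hνd'
  have : IsFiniteMeasure νd := isFiniteMeasure_of_le ν (hν_add ▸ Measure.le_add_left le_rfl)
  have : IsFiniteMeasure νd' := isFiniteMeasure_of_le ν' (hν'_add ▸ Measure.le_add_left le_rfl)
  have h_sum : ν + νd' = ν' + νd := by rw [hν_add, hν'_add, add_right_comm]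
  refine ext_of_integral_monotone_lipschitz fun g K hg hgK hg01 => ?_
  have h_limit := tendsto_integral_esdEval_add hgK hg01 hg ν νd' hs' hs0'
    (h.tendsto_integral_esdEval hX hν hgK hg01)
  have h_limit' := tendsto_integral_esdEval_add hgK hg01 hg ν' νd hs hs0
    (h'.tendsto_integral_esdEval hX' hν' hgK hg01)
  simp_rw [h_sum] at h_limit
  exact tendsto_nhds_unique h_limit h_limit'

/-- If two centered stationary Gaussian processes satisfying the standing
assumption have spectral measures with the same absolutely continuous density
`f`, then their limiting spectral distributions coincide. -/
theorem statement1 {Ω Ω' : Type} [MeasurableSpace Ω] [MeasurableSpace Ω']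
    (P : Measure Ω) (P' : Measure Ω') [IsProbabilityMeasure P]
    [IsProbabilityMeasure P'] (X : ℤ → ℤ → Ω → ℝ) (X' : ℤ → ℤ → Ω' → ℝ)
    (ν νd ν' νd' : Measure (ℝ × ℝ)) (f : ℝ × ℝ → ℝ)
    (hX : StatGauss P X) (hX' : StatGauss P' X')
    (hν : SpectralDecomp P X ν νd f) (hν' : SpectralDecomp P' X' ν' νd' f)
    (μ μ' : Measure ℝ) (hμ : IsProbabilityMeasure μ)
    (hμ' : IsProbabilityMeasure μ')
    (h1 : ESDTendstoInProb P (scaledW X) μ)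
    (h2 : ESDTendstoInProb P' (scaledW X') μ') :
    μ = μ' := by
  have := hν.finite
  have := hν'.finite
  exact statement1_general hX hX' hν.herglotz hν'.herglotz hν.decomp hν'.decomp
    hν.discrete hν'.discrete h1 h2

end
end

section
/- For every integer m ≥ 2, if ∫_{[−π,π]²} f(x,y)^m dx dy < ∞ (i.e., the L^m norm of f is finite), then the (2m)-th moment of the limiting spectral distribution is finite: ∫_ℝ x^{2m} μ_f(dx) < ∞. -/
open MeasureTheory ProbabilityTheory Filter Real

noncomputable section

/-!
Write `K(p)` for the matrix with entries `cos ((k - l) x) + cos ((k - l) y)`, where `p = (x, y)`,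
and `Γ = ∫ K dν`. The Gaussian matrix `W = W_N / √N` satisfies `𝔼 ‖W C‖² ≤ 2 tr (C Cᵀ Γ)` in the
Frobenius norm. Split `Γ = Γ_ac + Γ_d` according to `ν = ν_ac + ν_d`. To tame `Γ_d`, compress `W`
to `G W G` by the symmetric contraction `G = (1 + Γ_d)⁻¹`, for which `G Γ_d G ≤ 1`. The limiting
spectrum does not notice the compression: `‖1 - G‖² ≤ tr (G Γ_d) = ∫ tr (G K) dν_d`, and
`tr (G K(p)) ≤ 4 / ν_d {p}` at each atom `p`, so `‖1 - G‖² = o(N)` by dominated convergence, and the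
average of `min (x ^ (2m)) M` over the spectrum of `W` is controlled by the trace moment of `G W G`
up to a bounded error.

Gaussian integration by parts expresses `𝔼 tr A^(2q+2)`, where `A = G W G`, through the words
`A^k B A^l B` in `A` and an independent copy `B`. The trace of each word is at most
`2 tr (A^(2q) B²)`, whence `𝔼 tr A^(2q+2) ≤ 4 (2q + 1) 𝔼 tr (A^(2q) G Γ G)`. In the absolutely
continuous part of the right-hand side, Young's inequality
`f t^q ≤ η t^(q+1) + η^(-q) f^(q+1)` for the squared eigenvalues `t` of `A`, together with
`∫ K(x, y) dx dy = 8 π² I`, gives at most `8 π² η tr A^(2q+2)` plus `O(N)`, because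
`f ∈ L^(q+1)`; the discrete part is at most `tr A^(2q) ≤ η tr A^(2q+2) + η^(-q) N`. For small `η`
the terms in `tr A^(2q+2)` are absorbed in the left-hand side, so the trace moment is `O(N)`.
-/

/-! ### Scalar inequalities -/

theorem pow_mul_pow_le_add_pow {x y : ℝ} {k l q : ℕ} (h : k + l = 2 * q) :
    x ^ k * y ^ l ≤ x ^ (2 * q) + y ^ (2 * q) := by
  have hx : 0 ≤ x ^ (2 * q) := (even_two_mul q).pow_nonneg x
  have hy : 0 ≤ y ^ (2 * q) := (even_two_mul q).pow_nonneg y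
  have habs : x ^ k * y ^ l ≤ |x| ^ k * |y| ^ l := by
    rw [← abs_pow, ← abs_pow, ← abs_mul]
    exact le_abs_self _
  rcases le_total |x| |y| with hxy | hyx
  · calc x ^ k * y ^ l ≤ |y| ^ k * |y| ^ l := habs.trans (by gcongr)
      _ = y ^ (2 * q) := by rw [← pow_add, h, (even_two_mul q).pow_abs]
      _ ≤ x ^ (2 * q) + y ^ (2 * q) := le_add_of_nonneg_left hx
  · calc x ^ k * y ^ l ≤ |x| ^ k * |x| ^ l := habs.trans (by gcongr)
      _ = x ^ (2 * q) := by rw [← pow_add, h, (even_two_mul q).pow_abs]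
      _ ≤ x ^ (2 * q) + y ^ (2 * q) := le_add_of_nonneg_right hy

theorem mul_pow_le_mul_pow_succ_add {a t η : ℝ} (ha : 0 ≤ a) (ht : 0 ≤ t) (hη : 0 < η) (q : ℕ) :
    a * t ^ q ≤ η * t ^ (q + 1) + η⁻¹ ^ q * a ^ (q + 1) := by
  rcases le_total a (η * t) with h | h
  · calc a * t ^ q ≤ η * t * t ^ q := by gcongr
      _ = η * t ^ (q + 1) := by ring
      _ ≤ η * t ^ (q + 1) + η⁻¹ ^ q * a ^ (q + 1) := le_add_of_nonneg_right (by positivity)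
  · have hta : t ≤ η⁻¹ * a := by rwa [le_inv_mul_iff₀ hη]
    calc a * t ^ q ≤ a * (η⁻¹ * a) ^ q := by gcongr
      _ = η⁻¹ ^ q * a ^ (q + 1) := by ring
      _ ≤ η * t ^ (q + 1) + η⁻¹ ^ q * a ^ (q + 1) := le_add_of_nonneg_left (by positivity)

theorem min_add_pow_le {m : ℕ} (hm : m ≠ 0) (a b K : ℝ) :
    min ((a + b) ^ (2 * m)) K ≤ 4 ^ m * (a ^ (2 * m) + max 1 K * |b|) := by
  have ha : 0 ≤ a ^ (2 * m) := (even_two_mul m).pow_nonneg a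
  have h4 : (1 : ℝ) ≤ 4 ^ m := one_le_pow₀ (by norm_num)
  rcases le_total |b| 1 with hb | hb
  · have hpow : b ^ (2 * m) ≤ |b| := by
      rw [← (even_two_mul m).pow_abs]
      exact pow_le_of_le_one (abs_nonneg b) hb (by omega)
    have htwo : (2 : ℝ) ^ (2 * m - 1) ≤ 4 ^ m := by
      rw [show (4 : ℝ) = 2 ^ 2 by norm_num, ← pow_mul]
      exact pow_le_pow_right₀ (by norm_num) (by omega)
    calc min ((a + b) ^ (2 * m)) K ≤ (a + b) ^ (2 * m) := min_le_left _ _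
      _ ≤ 2 ^ (2 * m - 1) * (a ^ (2 * m) + b ^ (2 * m)) := (even_two_mul m).add_pow_le
      _ ≤ 4 ^ m * (a ^ (2 * m) + 1 * |b|) := by
        rw [one_mul]
        gcongr
        exact add_nonneg ha ((even_two_mul m).pow_nonneg b)
      _ ≤ 4 ^ m * (a ^ (2 * m) + max 1 K * |b|) := by
        gcongr
        exact le_max_left _ _
  · calc min ((a + b) ^ (2 * m)) K ≤ max 1 K := (min_le_right _ _).trans (le_max_right _ _)
      _ ≤ max 1 K * |b| := le_mul_of_one_le_right (by positivity) hb
      _ ≤ a ^ (2 * m) + max 1 K * |b| := le_add_of_nonneg_left ha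
      _ ≤ 4 ^ m * (a ^ (2 * m) + max 1 K * |b|) := le_mul_of_one_le_left (by positivity) h4

/-! ### Traces of real symmetric matrices -/

section SymmetricMatrices

open scoped Matrix

variable {n : Type*} [Fintype n]

/-- The squared Frobenius (Hilbert–Schmidt) norm `tr (Aᴴ A)`, that is `∑ i j, (A i j)²`. It is
used instead of Mathlib's Frobenius norm so as not to fix a norm on matrices. -/
def frobeniusSq (A : Matrix n n ℝ) : ℝ := (Aᴴ * A).trace

theorem frobeniusSq_eq_sum (A : Matrix n n ℝ) : frobeniusSq A = ∑ i, ∑ j, A i j ^ 2 := by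
  rw [frobeniusSq, Matrix.trace_mul_comm]
  simp only [Matrix.trace, Matrix.diag_apply, Matrix.mul_apply, Matrix.conjTranspose_apply,
    star_trivial, sq]

theorem frobeniusSq_nonneg (A : Matrix n n ℝ) : 0 ≤ frobeniusSq A :=
  (Matrix.posSemidef_conjTranspose_mul_self A).trace_nonneg

theorem sum_abs_mul_apply_diag_le (C D : Matrix n n ℝ) {η : ℝ} (hη : 0 < η) :
    ∑ j, |(C * D) j j| ≤ (η * frobeniusSq C + η⁻¹ * frobeniusSq D) / 2 := by
  have amgm (a b : ℝ) : |a * b| ≤ (η * a ^ 2 + η⁻¹ * b ^ 2) / 2 := by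
    have hsq : (η * |a| - |b|) ^ 2 * η⁻¹ = η * a ^ 2 + η⁻¹ * b ^ 2 - 2 * (|a| * |b|) := by
      field_simp
      rw [← sq_abs a, ← sq_abs b]
      ring
    have : 0 ≤ (η * |a| - |b|) ^ 2 * η⁻¹ := by positivity
    rw [abs_mul]
    linarith
  calc ∑ j, |(C * D) j j| ≤ ∑ j, ∑ k, |C j k * D k j| := by
        gcongr with j
        rw [Matrix.mul_apply]
        exact Finset.abs_sum_le_sum_abs _ _
    _ ≤ ∑ j, ∑ k, (η * C j k ^ 2 + η⁻¹ * D k j ^ 2) / 2 := by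
        gcongr
        exact amgm _ _
    _ = (η * frobeniusSq C + η⁻¹ * frobeniusSq D) / 2 := by
        simp only [frobeniusSq_eq_sum, ← Finset.sum_div, Finset.sum_add_distrib, Finset.mul_sum]
        rw [Finset.sum_comm (f := fun j k => η⁻¹ * D k j ^ 2)]

theorem isHermitian_mul_mul_self {G A : Matrix n n ℝ} (hG : G.IsHermitian) (hA : A.IsHermitian) :
    (G * A * G).IsHermitian := by
  simpa only [hG.eq] using Matrix.isHermitian_mul_mul_conjTranspose G hA

theorem trace_mul_mul_mul_self (A G S : Matrix n n ℝ) :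
    (A * (G * S * G)).trace = (G * A * G * S).trace := by
  rw [← Matrix.mul_assoc, Matrix.trace_mul_comm]
  simp only [Matrix.mul_assoc]

variable [DecidableEq n]

theorem frobeniusSq_mul_le {G : Matrix n n ℝ} (hG : (1 - Gᴴ * G).PosSemidef) (A : Matrix n n ℝ) :
    frobeniusSq (G * A) ≤ frobeniusSq A := by
  have h := (hG.conjTranspose_mul_mul_same A).trace_nonneg
  rw [mul_sub, sub_mul, mul_one, Matrix.trace_sub, sub_nonneg] at h
  simpa only [frobeniusSq, Matrix.conjTranspose_mul, Matrix.mul_assoc] using h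

variable {A B S : Matrix n n ℝ}

/-- The star-algebra automorphism of the matrix algebra that expresses a matrix in an orthonormal
eigenbasis of the symmetric matrix `A`. -/
def eigenbasisRep (hA : A.IsHermitian) : Matrix n n ℝ ≃⋆ₐ[ℝ] Matrix n n ℝ :=
  (Unitary.conjStarAlgAut ℝ _ hA.eigenvectorUnitary).symm

theorem eigenbasisRep_apply (hA : A.IsHermitian) (M : Matrix n n ℝ) :
    eigenbasisRep hA M =
      (hA.eigenvectorUnitary : Matrix n n ℝ)ᴴ * M * (hA.eigenvectorUnitary : Matrix n n ℝ) :=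
  Unitary.conjStarAlgAut_symm_apply _ _

theorem eigenbasisRep_self (hA : A.IsHermitian) :
    eigenbasisRep hA A = Matrix.diagonal hA.eigenvalues := by
  rw [eigenbasisRep, StarAlgEquiv.symm_apply_eq]
  exact hA.spectral_theorem

theorem trace_eigenbasisRep (hA : A.IsHermitian) (M : Matrix n n ℝ) :
    (eigenbasisRep hA M).trace = M.trace := by
  rw [eigenbasisRep_apply, Matrix.trace_mul_cycle]
  exact congrArg (fun V => (V * M).trace) (Unitary.coe_mul_star_self hA.eigenvectorUnitary)
    |>.trans (congrArg Matrix.trace (one_mul M))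

theorem posSemidef_eigenbasisRep (hA : A.IsHermitian) (hS : S.PosSemidef) :
    (eigenbasisRep hA S).PosSemidef := by
  rw [eigenbasisRep_apply]
  exact hS.conjTranspose_mul_mul_same _

theorem conjTranspose_eigenbasisRep (hA : A.IsHermitian) (M : Matrix n n ℝ) :
    (eigenbasisRep hA M)ᴴ = eigenbasisRep hA Mᴴ :=
  (map_star (eigenbasisRep hA) M).symm

theorem frobeniusSq_eigenbasisRep (hA : A.IsHermitian) (M : Matrix n n ℝ) :
    frobeniusSq (eigenbasisRep hA M) = frobeniusSq M := by
  rw [frobeniusSq, conjTranspose_eigenbasisRep, ← map_mul, trace_eigenbasisRep, frobeniusSq]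

theorem exists_trace_pow_mul_eq_sum (hA : A.IsHermitian) (hS : S.PosSemidef) :
    ∃ w : n → ℝ, (∀ j, 0 ≤ w j) ∧ ∀ k, (A ^ k * S).trace = ∑ j, hA.eigenvalues j ^ k * w j := by
  refine ⟨fun j => eigenbasisRep hA S j j, fun j => (posSemidef_eigenbasisRep hA hS).diag_nonneg,
    fun k => ?_⟩
  rw [← trace_eigenbasisRep hA, map_mul, map_pow, eigenbasisRep_self, Matrix.diagonal_pow]
  simp only [Matrix.trace, Matrix.diag_apply, Matrix.diagonal_mul, Pi.pow_apply]

theorem trace_pow_two_mul_mul_nonneg (hA : A.IsHermitian) (hS : S.PosSemidef) (q : ℕ) :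
    0 ≤ (A ^ (2 * q) * S).trace := by
  obtain ⟨w, hw, htr⟩ := exists_trace_pow_mul_eq_sum hA hS
  rw [htr]
  exact Finset.sum_nonneg fun j _ => mul_nonneg ((even_two_mul q).pow_nonneg _) (hw j)

theorem trace_mul_nonneg_of_posSemidef {n : Type*} [Fintype n] {A S : Matrix n n ℝ}
    (hA : A.PosSemidef) (hS : S.PosSemidef) : 0 ≤ (A * S).trace := by
  classical
  obtain ⟨w, hw, htr⟩ := exists_trace_pow_mul_eq_sum hA.isHermitian hS
  rw [← pow_one A, htr]
  exact Finset.sum_nonneg fun j _ => mul_nonneg (pow_nonneg (hA.eigenvalues_nonneg j) 1) (hw j)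

theorem mul_trace_pow_mul_le (hA : A.IsHermitian) (hS : S.PosSemidef) {a η : ℝ} (ha : 0 ≤ a)
    (hη : 0 < η) (q : ℕ) :
    a * (A ^ (2 * q) * S).trace
      ≤ η * (A ^ (2 * (q + 1)) * S).trace + η⁻¹ ^ q * a ^ (q + 1) * S.trace := by
  obtain ⟨w, hw, htr⟩ := exists_trace_pow_mul_eq_sum hA hS
  have htr0 : S.trace = ∑ j, w j := by simpa using htr 0
  rw [htr, htr, htr0, Finset.mul_sum, Finset.mul_sum, Finset.mul_sum, ← Finset.sum_add_distrib]
  refine Finset.sum_le_sum fun j _ => ?_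
  have young := mul_le_mul_of_nonneg_right
    (mul_pow_le_mul_pow_succ_add ha (sq_nonneg (hA.eigenvalues j)) hη q) (hw j)
  rw [pow_mul, pow_mul]
  linarith

theorem trace_pow_mul_le_of_posSemidef_one_sub (hA : A.IsHermitian)
    (hS : (1 - S).PosSemidef) (q : ℕ) :
    (A ^ (2 * q) * S).trace ≤ (A ^ (2 * q)).trace := by
  have h := trace_pow_two_mul_mul_nonneg hA hS q
  rwa [mul_sub, mul_one, Matrix.trace_sub, sub_nonneg] at h

theorem trace_pow_mul_le_mul_trace_pow_succ_add (hA : A.IsHermitian)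
    (hS : (1 - S).PosSemidef) {η : ℝ} (hη : 0 < η) (q : ℕ) :
    (A ^ (2 * q) * S).trace ≤ η * (A ^ (2 * (q + 1))).trace + η⁻¹ ^ q * Fintype.card n := by
  refine (trace_pow_mul_le_of_posSemidef_one_sub hA hS q).trans ?_
  simpa only [one_mul, mul_one, one_pow, Matrix.trace_one] using
    mul_trace_pow_mul_le hA Matrix.PosSemidef.one zero_le_one hη q

theorem trace_word_le (hA : A.IsHermitian) (hB : B.IsHermitian) {k l q : ℕ} (h : k + l = 2 * q) :
    (B * A ^ k * B * A ^ l).trace ≤ 2 * (B * B * A ^ (2 * q)).trace := by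
  set b := eigenbasisRep hA B with hb
  have b_symm (i j : n) : b j i = b i j := by
    have : bᴴ = b := by rw [hb, conjTranspose_eigenbasisRep, hB.eq]
    simpa using congrFun₂ this i j
  have word (k l : ℕ) : (B * A ^ k * B * A ^ l).trace =
      ∑ i, ∑ j, b i j ^ 2 * (hA.eigenvalues j ^ k * hA.eigenvalues i ^ l) := by
    rw [← trace_eigenbasisRep hA, mul_assoc]
    simp only [map_mul, map_pow, eigenbasisRep_self, Matrix.diagonal_pow, ← hb]
    refine Finset.sum_congr rfl fun i _ => ?_
    rw [Matrix.diag_apply, Matrix.mul_apply]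
    refine Finset.sum_congr rfl fun j _ => ?_
    simp only [Matrix.mul_diagonal, Pi.pow_apply, b_symm i j]
    ring
  have hswap : ∑ i, ∑ j, b i j ^ 2 * hA.eigenvalues j ^ (2 * q)
      = ∑ i, ∑ j, b i j ^ 2 * hA.eigenvalues i ^ (2 * q) := by
    rw [Finset.sum_comm]
    simp only [b_symm]
  calc (B * A ^ k * B * A ^ l).trace
      = ∑ i, ∑ j, b i j ^ 2 * (hA.eigenvalues j ^ k * hA.eigenvalues i ^ l) := word k l
    _ ≤ ∑ i, ∑ j, b i j ^ 2 * (hA.eigenvalues j ^ (2 * q) + hA.eigenvalues i ^ (2 * q)) := by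
        gcongr
        exact pow_mul_pow_le_add_pow h
    _ = 2 * (B * A ^ 0 * B * A ^ (2 * q)).trace := by
        rw [word]
        simp only [mul_add, Finset.sum_add_distrib, hswap, pow_zero, one_mul]
        ring
    _ = 2 * (B * B * A ^ (2 * q)).trace := by rw [pow_zero, mul_one]

theorem apply_diag_pow_le_pow_apply_diag (hA : A.IsHermitian) {p : ℕ} (hp : Even p) (j : n) :
    A j j ^ p ≤ (A ^ p) j j := by
  let U : Matrix n n ℝ := hA.eigenvectorUnitary.1
  have entry (k : ℕ) : (A ^ k) j j = ∑ i, U j i ^ 2 * hA.eigenvalues i ^ k := by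
    have : A ^ k = U * Matrix.diagonal (hA.eigenvalues ^ k) * Uᴴ := by
      have h := congrArg (eigenbasisRep hA).symm (map_pow (eigenbasisRep hA) A k)
      rw [StarAlgEquiv.symm_apply_apply, eigenbasisRep_self, Matrix.diagonal_pow] at h
      exact h
    rw [this, Matrix.mul_apply]
    refine Finset.sum_congr rfl fun i _ => ?_
    simp only [Matrix.mul_diagonal, Matrix.conjTranspose_apply, star_trivial, Pi.pow_apply]
    ring
  have weights : ∑ i, U j i ^ 2 = 1 := by simpa using (entry 0).symm
  have jensen := Real.pow_arith_mean_le_arith_mean_pow_of_even Finset.univ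
    (fun i => U j i ^ 2) hA.eigenvalues (fun i _ => sq_nonneg _) weights hp
  have mean : A j j = ∑ i, U j i ^ 2 * hA.eigenvalues i := by simpa using entry 1
  rwa [entry p, mean]

theorem sum_min_eigenvalues_pow_le {W G : Matrix n n ℝ} (hW : W.IsHermitian) (hG : G.IsHermitian)
    (hGG : (1 - G * G).PosSemidef) {m : ℕ} (hm : m ≠ 0) (K : ℝ) {η : ℝ} (hη : 0 < η) :
    ∑ j, min (hW.eigenvalues j ^ (2 * m)) K ≤ 4 ^ m * (((G * W * G) ^ (2 * m)).trace
      + max 1 K * (η * frobeniusSq W + η⁻¹ * frobeniusSq (1 - G))) := by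
  set φ := eigenbasisRep hW
  set E := (1 - G) * W + G * W * (1 - G)
  have hGWG : (φ (G * W * G)).IsHermitian :=
    (conjTranspose_eigenbasisRep hW _).trans (congrArg φ (isHermitian_mul_mul_self hG hW))
  have eigenvalue (j : n) : hW.eigenvalues j = φ (G * W * G) j j + φ E j j := by
    have hsum : G * W * G + E = W := by simp only [E]; noncomm_ring
    rw [← Matrix.add_apply, ← map_add, hsum, eigenbasisRep_self, Matrix.diagonal_apply_eq]
  have main : ∑ j, φ (G * W * G) j j ^ (2 * m) ≤ ((G * W * G) ^ (2 * m)).trace := by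
    rw [← trace_eigenbasisRep hW, map_pow]
    exact Finset.sum_le_sum fun j _ => apply_diag_pow_le_pow_apply_diag hGWG (even_two_mul m) j
  have error : ∑ j, |φ E j j| ≤ η * frobeniusSq W + η⁻¹ * frobeniusSq (1 - G) := by
    have left := sum_abs_mul_apply_diag_le (φ (1 - G)) (φ W) (inv_pos.2 hη)
    have right := sum_abs_mul_apply_diag_le (φ (G * W)) (φ (1 - G)) hη
    have contraction : η * frobeniusSq (G * W) ≤ η * frobeniusSq W := by
      gcongr
      exact frobeniusSq_mul_le (by rwa [hG.eq]) W
    simp only [φ, frobeniusSq_eigenbasisRep, ← map_mul, inv_inv] at left right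
    calc ∑ j, |φ E j j| ≤ ∑ j, |φ ((1 - G) * W) j j| + ∑ j, |φ (G * W * (1 - G)) j j| := by
          rw [← Finset.sum_add_distrib]
          gcongr
          rw [map_add, Matrix.add_apply]
          exact abs_add_le _ _
      _ ≤ η * frobeniusSq W + η⁻¹ * frobeniusSq (1 - G) := by linarith
  calc ∑ j, min (hW.eigenvalues j ^ (2 * m)) K
      ≤ ∑ j, 4 ^ m * (φ (G * W * G) j j ^ (2 * m) + max 1 K * |φ E j j|) := by
        gcongr with j
        rw [eigenvalue]
        exact min_add_pow_le hm _ _ K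
    _ = 4 ^ m * (∑ j, φ (G * W * G) j j ^ (2 * m) + max 1 K * ∑ j, |φ E j j|) := by
        rw [← Finset.mul_sum, Finset.sum_add_distrib, Finset.mul_sum]
    _ ≤ _ := by gcongr

/-! ### The resolvent of a positive semidefinite matrix -/

variable {D : Matrix n n ℝ}

/-- The resolvent `(1 + D)⁻¹`; for positive semidefinite `D` it is a symmetric contraction that
damps the directions in which `D` is large. -/
def resolventAtOne (D : Matrix n n ℝ) : Matrix n n ℝ := (1 + D)⁻¹

namespace resolventAtOne

theorem posSemidef (hD : D.PosSemidef) : (resolventAtOne D).PosSemidef :=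
  (Matrix.PosSemidef.one.add hD).inv

theorem isHermitian (hD : D.PosSemidef) : (resolventAtOne D).IsHermitian :=
  (posSemidef hD).isHermitian

theorem one_add_mul_self (hD : D.PosSemidef) : (1 + D) * resolventAtOne D = 1 :=
  Matrix.mul_nonsing_inv _
    ((Matrix.isUnit_iff_isUnit_det _).1 (Matrix.PosDef.one.add_posSemidef hD).isUnit)

theorem self_mul_one_add (hD : D.PosSemidef) : resolventAtOne D * (1 + D) = 1 :=
  mul_eq_one_comm.1 (one_add_mul_self hD)

theorem one_sub_eq (hD : D.PosSemidef) : 1 - resolventAtOne D = resolventAtOne D * D := by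
  rw [sub_eq_iff_eq_add', ← self_mul_one_add hD]
  noncomm_ring

theorem posSemidef_mul_mul_self (hD : D.PosSemidef) :
    (resolventAtOne D * D * resolventAtOne D).PosSemidef := by
  simpa only [(isHermitian hD).eq] using hD.conjTranspose_mul_mul_same (resolventAtOne D)

theorem posSemidef_mul_sq_mul (hD : D.PosSemidef) :
    (resolventAtOne D * (D * D) * resolventAtOne D).PosSemidef := by
  simpa only [(isHermitian hD).eq, hD.isHermitian.eq] using
    (Matrix.posSemidef_conjTranspose_mul_self D).conjTranspose_mul_mul_same (resolventAtOne D)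

theorem mul_one_add_mul_self (hD : D.PosSemidef) :
    resolventAtOne D * (1 + D) * resolventAtOne D = resolventAtOne D := by
  rw [self_mul_one_add hD, one_mul]

theorem one_eq (hD : D.PosSemidef) :
    1 = resolventAtOne D * ((1 + D) * (1 + D)) * resolventAtOne D := by
  rw [← mul_assoc, self_mul_one_add hD, one_mul, one_add_mul_self hD]

theorem posSemidef_one_sub (hD : D.PosSemidef) : (1 - resolventAtOne D).PosSemidef := by
  set G := resolventAtOne D
  have : 1 - G = G * D * G + G * (D * D) * G := calc
    1 - G = G * ((1 + D) * (1 + D)) * G - G * (1 + D) * G :=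
      congrArg₂ (· - ·) (one_eq hD) (mul_one_add_mul_self hD).symm
    _ = G * D * G + G * (D * D) * G := by noncomm_ring
  rw [this]
  exact (posSemidef_mul_mul_self hD).add (posSemidef_mul_sq_mul hD)

theorem posSemidef_one_sub_mul_self (hD : D.PosSemidef) :
    (1 - resolventAtOne D * resolventAtOne D).PosSemidef := by
  set G := resolventAtOne D
  have : 1 - G * G = G * D * G + G * D * G + G * (D * D) * G := by
    nth_rw 1 [one_eq hD]
    noncomm_ring
  rw [this]
  exact ((posSemidef_mul_mul_self hD).add (posSemidef_mul_mul_self hD)).add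
    (posSemidef_mul_sq_mul hD)

theorem posSemidef_one_sub_mul_mul_self (hD : D.PosSemidef) :
    (1 - resolventAtOne D * D * resolventAtOne D).PosSemidef := by
  set G := resolventAtOne D
  have : 1 - G * D * G = Gᴴ * G + G * D * G + G * (D * D) * G := by
    rw [(isHermitian hD).eq]
    nth_rw 1 [one_eq hD]
    noncomm_ring
  rw [this]
  exact ((Matrix.posSemidef_conjTranspose_mul_self G).add (posSemidef_mul_mul_self hD)).add
    (posSemidef_mul_sq_mul hD)

theorem frobeniusSq_one_sub_le (hD : D.PosSemidef) :
    frobeniusSq (1 - resolventAtOne D) ≤ (resolventAtOne D * D).trace := by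
  set G := resolventAtOne D
  have hsub : (1 - G)ᴴ * (1 - G) = G * D - G * D * G := by
    rw [Matrix.conjTranspose_sub, Matrix.conjTranspose_one, (isHermitian hD).eq, one_sub_eq hD]
    nth_rw 2 [← one_sub_eq hD]
    noncomm_ring
  rw [frobeniusSq, hsub, Matrix.trace_sub]
  exact sub_le_self _ (posSemidef_mul_mul_self hD).trace_nonneg

theorem mul_dotProduct_mulVec_le_one (hD : D.PosSemidef) {t : ℝ} {w : n → ℝ}
    (h : (D - t • Matrix.vecMulVec w w).PosSemidef) :
    t * (w ⬝ᵥ resolventAtOne D *ᵥ w) ≤ 1 := by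
  set G := resolventAtOne D
  set s := w ⬝ᵥ G *ᵥ w with hs
  have s_nonneg : 0 ≤ s := (posSemidef hD).dotProduct_mulVec_nonneg w
  have rank_one : w ⬝ᵥ (G * (t • Matrix.vecMulVec w w) * G) *ᵥ w = t * s * s := by
    simp only [← Matrix.mulVec_mulVec, Matrix.smul_mulVec, Matrix.vecMulVec_mulVec, ← hs,
      Matrix.mulVec_smul, dotProduct_smul, op_smul_eq_smul, smul_eq_mul]
    ring
  have lower := (h.conjTranspose_mul_mul_same G).dotProduct_mulVec_nonneg w
  have upper := (Matrix.posSemidef_conjTranspose_mul_self G).dotProduct_mulVec_nonneg w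
  have hGG : Gᴴ * G = G - G * D * G := by
    rw [(isHermitian hD).eq, eq_sub_iff_add_eq]
    simpa only [mul_add, add_mul, mul_one] using mul_one_add_mul_self hD
  rw [hGG, star_trivial, Matrix.sub_mulVec, dotProduct_sub] at upper
  rw [(isHermitian hD).eq, star_trivial, mul_sub, sub_mul, Matrix.sub_mulVec, dotProduct_sub,
    rank_one] at lower
  rcases s_nonneg.eq_or_lt with hs0 | hs0
  · simp [← hs0]
  · exact le_of_mul_le_mul_right (by linarith) hs0

end resolventAtOne

end SymmetricMatrices

/-! ### Gram matrices of the cosine kernel -/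

theorem integral_trace_mul {α n : Type*} [MeasurableSpace α] [Fintype n] {μ : Measure α}
    {T : α → Matrix n n ℝ} (hT : ∀ k l, Integrable (fun a => T a k l) μ) (M : Matrix n n ℝ) :
    ∫ a, (M * T a).trace ∂μ = (M * Matrix.of fun k l => ∫ a, T a k l ∂μ).trace := by
  have hint (i j : n) : Integrable (fun a => M i j * T a j i) μ := (hT j i).const_mul _
  simp only [Matrix.trace, Matrix.diag_apply, Matrix.mul_apply, Matrix.of_apply]
  rw [integral_finsetSum _ fun i _ => integrable_finsetSum _ fun j _ => hint i j]
  refine Finset.sum_congr rfl fun i _ => ?_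
  rw [integral_finsetSum _ fun j _ => hint i j]
  exact Finset.sum_congr rfl fun j _ => integral_const_mul _ _

section CosineKernel

open scoped Matrix

/-- The Toeplitz matrix `(cos ((k - l) x))_{k,l}`. -/
def cosMatrix (N : ℕ) (x : ℝ) : Matrix (Fin N) (Fin N) ℝ :=
  Matrix.of fun k l => cos (((k : ℕ) - (l : ℕ) : ℝ) * x)

/-- The vector `(cos (k x))_k`; with `sinVec` it spans the range of `cosMatrix N x`. -/
def cosVec (N : ℕ) (x : ℝ) : Fin N → ℝ := fun k => cos ((k : ℕ) * x)

/-- The vector `(sin (k x))_k`, the companion of `cosVec`. -/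
def sinVec (N : ℕ) (x : ℝ) : Fin N → ℝ := fun k => sin ((k : ℕ) * x)

/-- The sum of the cosine Toeplitz matrices of the two coordinates of `p`: under the spectral
measure, one accounts for the rows of the field and the other one for its columns. -/
def bicosMatrix (N : ℕ) (p : ℝ × ℝ) : Matrix (Fin N) (Fin N) ℝ :=
  cosMatrix N p.1 + cosMatrix N p.2

/-- The entrywise integral of `bicosMatrix N` against `μ`. -/
def cosGram (μ : Measure (ℝ × ℝ)) (N : ℕ) : Matrix (Fin N) (Fin N) ℝ :=
  Matrix.of fun k l => ∫ p, bicosMatrix N p k l ∂μ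

variable {N : ℕ}

theorem cosMatrix_eq_vecMulVec_add_vecMulVec (x : ℝ) :
    cosMatrix N x = Matrix.vecMulVec (cosVec N x) (cosVec N x)
      + Matrix.vecMulVec (sinVec N x) (sinVec N x) := by
  ext k l
  simp only [cosMatrix, cosVec, sinVec, Matrix.of_apply, Matrix.add_apply, Matrix.vecMulVec_apply,
    sub_mul, cos_sub]

theorem posSemidef_vecMulVec_self {n : Type*} [Finite n] (w : n → ℝ) :
    (Matrix.vecMulVec w w).PosSemidef := by
  have := Fintype.ofFinite n
  simpa only [star_trivial] using Matrix.posSemidef_vecMulVec_self_star w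

theorem posSemidef_cosMatrix (x : ℝ) : (cosMatrix N x).PosSemidef := by
  rw [cosMatrix_eq_vecMulVec_add_vecMulVec]
  exact (posSemidef_vecMulVec_self _).add (posSemidef_vecMulVec_self _)

theorem posSemidef_bicosMatrix (p : ℝ × ℝ) : (bicosMatrix N p).PosSemidef :=
  (posSemidef_cosMatrix p.1).add (posSemidef_cosMatrix p.2)

theorem trace_bicosMatrix (p : ℝ × ℝ) : (bicosMatrix N p).trace = 2 * N := by
  simp only [bicosMatrix, cosMatrix, Matrix.trace, Matrix.diag_apply, Matrix.add_apply,
    Matrix.of_apply, sub_self, zero_mul, cos_zero, Finset.sum_const, Finset.card_univ,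
    Fintype.card_fin, nsmul_eq_mul]
  ring

theorem continuous_bicosMatrix : Continuous (bicosMatrix N) := by
  unfold bicosMatrix cosMatrix
  fun_prop

theorem integrable_mul_bicosMatrix_apply {μ : Measure (ℝ × ℝ)} {g : ℝ × ℝ → ℝ}
    (hg : Integrable g μ) (k l : Fin N) : Integrable (fun p => g p * bicosMatrix N p k l) μ := by
  refine hg.mul_bdd (c := 2) (continuous_bicosMatrix.matrix_elem k l).aestronglyMeasurable
    (ae_of_all _ fun p => ?_)
  have hcos (x : ℝ) : |cosMatrix N x k l| ≤ 1 := abs_cos_le_one _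
  exact (abs_add_le _ _).trans (by linarith [hcos p.1, hcos p.2])

theorem integrable_mul_trace_mul_bicosMatrix {μ : Measure (ℝ × ℝ)} {g : ℝ × ℝ → ℝ}
    (hg : Integrable g μ) (M : Matrix (Fin N) (Fin N) ℝ) :
    Integrable (fun p => g p * (M * bicosMatrix N p).trace) μ := by
  simp only [Matrix.trace, Matrix.diag_apply, Matrix.mul_apply, Finset.mul_sum, mul_left_comm (g _)]
  exact integrable_finsetSum _ fun i _ => integrable_finsetSum _ fun j _ =>
    (integrable_mul_bicosMatrix_apply hg j i).const_mul _

theorem integrable_bicosMatrix_apply (μ : Measure (ℝ × ℝ)) [IsFiniteMeasure μ] (k l : Fin N) :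
    Integrable (fun p => bicosMatrix N p k l) μ := by
  simpa only [one_mul] using integrable_mul_bicosMatrix_apply (integrable_const (1 : ℝ)) k l

theorem integrable_trace_mul_bicosMatrix (μ : Measure (ℝ × ℝ)) [IsFiniteMeasure μ]
    (M : Matrix (Fin N) (Fin N) ℝ) : Integrable (fun p => (M * bicosMatrix N p).trace) μ := by
  simpa only [one_mul] using integrable_mul_trace_mul_bicosMatrix (integrable_const (1 : ℝ)) M

theorem trace_mul_cosGram (μ : Measure (ℝ × ℝ)) [IsFiniteMeasure μ]
    (M : Matrix (Fin N) (Fin N) ℝ) :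
    (M * cosGram μ N).trace = ∫ p, (M * bicosMatrix N p).trace ∂μ :=
  (integral_trace_mul (integrable_bicosMatrix_apply μ) M).symm

theorem cosGram_add (μ μ' : Measure (ℝ × ℝ)) [IsFiniteMeasure μ] [IsFiniteMeasure μ'] :
    cosGram (μ + μ') N = cosGram μ N + cosGram μ' N := by
  ext k l
  exact integral_add_measure (integrable_bicosMatrix_apply μ k l)
    (integrable_bicosMatrix_apply μ' k l)

theorem posSemidef_cosGram (μ : Measure (ℝ × ℝ)) [IsFiniteMeasure μ] :
    (cosGram μ N).PosSemidef := by
  refine Matrix.PosSemidef.of_dotProduct_mulVec_nonneg ?_ fun v => ?_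
  · ext k l
    exact integral_congr_ae (ae_of_all _ fun p => (posSemidef_bicosMatrix p).isHermitian.apply k l)
  · rw [star_trivial, dotProduct_comm, ← Matrix.trace_vecMulVec, ← Matrix.mul_vecMulVec,
      Matrix.trace_mul_comm, trace_mul_cosGram]
    exact integral_nonneg fun p =>
      trace_mul_nonneg_of_posSemidef (posSemidef_vecMulVec_self v) (posSemidef_bicosMatrix p)

theorem posSemidef_cosGram_sub_atom (μ : Measure (ℝ × ℝ)) [IsFiniteMeasure μ] (p : ℝ × ℝ) :
    (cosGram μ N - μ.real {p} • bicosMatrix N p).PosSemidef := by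
  have hp : cosGram (μ.restrict {p}) N = μ.real {p} • bicosMatrix N p := by
    ext k l
    exact integral_singleton _ p
  have hsplit : cosGram μ N = cosGram (μ.restrict {p}) N + cosGram (μ.restrict {p}ᶜ) N := by
    rw [← cosGram_add, Measure.restrict_add_restrict_compl (measurableSet_singleton p)]
  rw [hsplit, hp, add_sub_cancel_left]
  exact posSemidef_cosGram _

theorem volume_restrict_specBox : (volume : Measure (ℝ × ℝ)).restrict specBox =
    (volume.restrict (Set.Ioc (-π) π)).prod (volume.restrict (Set.Ioc (-π) π)) := by
  rw [Measure.prod_restrict]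
  rfl

instance isFiniteMeasure_restrict_specBox :
    IsFiniteMeasure ((volume : Measure (ℝ × ℝ)).restrict specBox) := by
  rw [volume_restrict_specBox]
  infer_instance

theorem setIntegral_cos_int_mul (k : ℤ) :
    ∫ x in Set.Ioc (-π) π, cos (k * x) = if k = 0 then 2 * π else 0 := by
  rw [← intervalIntegral.integral_of_le (by linarith [pi_pos])]
  split_ifs with hk
  · simp [hk, two_mul]
  · rw [intervalIntegral.integral_comp_mul_left (fun x => cos x) (Int.cast_ne_zero.2 hk),
      integral_cos, mul_neg, sin_neg, sin_int_mul_pi]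
    simp

theorem cosGram_restrict_specBox :
    cosGram (volume.restrict specBox) N = (8 * π ^ 2) • (1 : Matrix (Fin N) (Fin N) ℝ) := by
  ext k l
  have hcos : ∫ x in Set.Ioc (-π) π, cos (((k : ℕ) - (l : ℕ) : ℝ) * x)
      = if k = l then 2 * π else 0 := by
    simpa [sub_eq_zero, Fin.ext_iff] using setIntegral_cos_int_mul ((k : ℕ) - (l : ℕ))
  have hint : Integrable (fun x => cos (((k : ℕ) - (l : ℕ) : ℝ) * x))
      (volume.restrict (Set.Ioc (-π) π)) :=
    (by fun_prop : Continuous _).integrableOn_Ioc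
  have hvol : (volume.restrict (Set.Ioc (-π) π)).real Set.univ = 2 * π := by
    rw [measureReal_restrict_apply_univ, Real.volume_real_Ioc_of_le (by linarith [pi_pos])]
    ring
  simp only [cosGram, bicosMatrix, cosMatrix, Matrix.of_apply, Matrix.add_apply,
    volume_restrict_specBox]
  rw [integral_add (hint.comp_fst _) (hint.comp_snd _), integral_fun_fst
      (fun x => cos (((k : ℕ) - (l : ℕ) : ℝ) * x)), integral_fun_snd
      (fun x => cos (((k : ℕ) - (l : ℕ) : ℝ) * x)), hvol,
    hcos, Matrix.smul_apply, Matrix.one_apply]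
  split_ifs <;> simp only [smul_eq_mul] <;> ring

theorem mul_trace_resolventAtOne_mul_cosMatrix_le {D : Matrix (Fin N) (Fin N) ℝ}
    (hD : D.PosSemidef) {t : ℝ} (ht : 0 ≤ t) {x : ℝ} (h : (D - t • cosMatrix N x).PosSemidef) :
    t * (resolventAtOne D * cosMatrix N x).trace ≤ 2 := by
  rw [cosMatrix_eq_vecMulVec_add_vecMulVec] at h ⊢
  set c := cosVec N x
  set s := sinVec N x
  have hc : (D - t • Matrix.vecMulVec c c).PosSemidef := by
    convert h.add ((posSemidef_vecMulVec_self s).smul ht) using 1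
    module
  have hs : (D - t • Matrix.vecMulVec s s).PosSemidef := by
    convert h.add ((posSemidef_vecMulVec_self c).smul ht) using 1
    module
  rw [mul_add, Matrix.trace_add, Matrix.mul_vecMulVec, Matrix.mul_vecMulVec,
    Matrix.trace_vecMulVec, Matrix.trace_vecMulVec, dotProduct_comm, dotProduct_comm _ s]
  linarith [resolventAtOne.mul_dotProduct_mulVec_le_one hD hc,
    resolventAtOne.mul_dotProduct_mulVec_le_one hD hs]

section Discrete

variable (μ : Measure (ℝ × ℝ)) [IsFiniteMeasure μ]

theorem trace_resolventAtOne_mul_bicosMatrix_nonneg (p : ℝ × ℝ) :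
    0 ≤ (resolventAtOne (cosGram μ N) * bicosMatrix N p).trace :=
  trace_mul_nonneg_of_posSemidef (resolventAtOne.posSemidef (posSemidef_cosGram μ))
    (posSemidef_bicosMatrix p)

theorem trace_resolventAtOne_mul_bicosMatrix_le (p : ℝ × ℝ) :
    (resolventAtOne (cosGram μ N) * bicosMatrix N p).trace ≤ 2 * N := by
  have h := trace_mul_nonneg_of_posSemidef
    (resolventAtOne.posSemidef_one_sub (posSemidef_cosGram (N := N) μ)) (posSemidef_bicosMatrix p)
  rwa [sub_mul, one_mul, Matrix.trace_sub, trace_bicosMatrix, sub_nonneg] at h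

theorem measureReal_singleton_mul_trace_le (p : ℝ × ℝ) :
    μ.real {p} * (resolventAtOne (cosGram μ N) * bicosMatrix N p).trace ≤ 4 := by
  have hD := posSemidef_cosGram (N := N) μ
  have ht : 0 ≤ μ.real {p} := measureReal_nonneg
  have hp := posSemidef_cosGram_sub_atom (N := N) μ p
  rw [bicosMatrix, smul_add] at hp
  have fst : (cosGram μ N - μ.real {p} • cosMatrix N p.1).PosSemidef := by
    convert hp.add ((posSemidef_cosMatrix p.2).smul ht) using 1
    abel
  have snd : (cosGram μ N - μ.real {p} • cosMatrix N p.2).PosSemidef := by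
    convert hp.add ((posSemidef_cosMatrix p.1).smul ht) using 1
    abel
  rw [bicosMatrix, mul_add, Matrix.trace_add, mul_add]
  linarith [mul_trace_resolventAtOne_mul_cosMatrix_le hD ht fst,
    mul_trace_resolventAtOne_mul_cosMatrix_le hD ht snd]

theorem ae_measureReal_singleton_pos {α : Type*} [MeasurableSpace α] {μ : Measure α}
    [IsFiniteMeasure μ] {s : Set α} (hs : s.Countable) (h0 : μ sᶜ = 0) :
    ∀ᵐ p ∂μ, 0 < μ.real {p} := by
  have hnull : μ (⋃ p ∈ {p ∈ s | μ {p} = 0}, {p}) = 0 :=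
    (measure_biUnion_null_iff (hs.mono fun p hp => hp.1)).2 fun p hp => hp.2
  refine measure_mono_null (fun p hp => ?_) (measure_union_null h0 hnull)
  by_cases hps : p ∈ s
  · have : μ.real {p} = 0 := le_antisymm (not_lt.1 hp) measureReal_nonneg
    exact Or.inr (Set.mem_biUnion ⟨hps, (measureReal_eq_zero_iff).1 this⟩ rfl)
  · exact Or.inl hps

theorem tendsto_frobeniusSq_one_sub_resolventAtOne_cosGram {s : Set (ℝ × ℝ)} (hs : s.Countable)
    (h0 : μ sᶜ = 0) :
    Tendsto (fun N : ℕ => frobeniusSq (1 - resolventAtOne (cosGram μ N)) / N) atTop (nhds 0) := by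
  set τ : ℕ → ℝ × ℝ → ℝ := fun N p => (resolventAtOne (cosGram μ N) * bicosMatrix N p).trace
  have hτ0 (N : ℕ) (p : ℝ × ℝ) : 0 ≤ τ N p / N :=
    div_nonneg (trace_resolventAtOne_mul_bicosMatrix_nonneg μ p) N.cast_nonneg
  have lim : Tendsto (fun N : ℕ => ∫ p, τ N p / N ∂μ) atTop (nhds (∫ _, (0 : ℝ) ∂μ)) := by
    refine tendsto_integral_of_dominated_convergence (fun _ => 2)
      (fun N => ((integrable_trace_mul_bicosMatrix μ _).div_const _).aestronglyMeasurable)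
      (integrable_const _) (fun N => ae_of_all _ fun p => ?_) ?_
    · rw [Real.norm_of_nonneg (hτ0 N p)]
      exact div_le_of_le_mul₀ N.cast_nonneg zero_le_two
        (trace_resolventAtOne_mul_bicosMatrix_le μ p)
    · filter_upwards [ae_measureReal_singleton_pos hs h0] with p hp
      refine squeeze_zero (hτ0 · p) (fun N => ?_)
        (tendsto_const_div_atTop_nhds_zero_nat (4 / μ.real {p}))
      gcongr
      rw [le_div_iff₀' hp]
      exact measureReal_singleton_mul_trace_le μ p
  rw [integral_zero] at lim
  refine squeeze_zero (fun N => div_nonneg (frobeniusSq_nonneg _) N.cast_nonneg) (fun N => ?_) lim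
  rw [integral_div, ← trace_mul_cosGram]
  gcongr
  exact resolventAtOne.frobeniusSq_one_sub_le (posSemidef_cosGram μ)

end Discrete

end CosineKernel

/-! ### Gaussian integration by parts in a normed algebra -/

section IntegrationByParts

variable {𝔸 : Type*} [NormedRing 𝔸]

/-- In the expansion of `v * u ^ n` by Wick's rule, the sum of the words in which the initial `v`
is paired with one of the `n` letters `u`, the two paired letters being written `v`. -/
def pairingSum (n : ℕ) (u v : 𝔸) : 𝔸 :=
  ∑ k ∈ Finset.range n, v * u ^ (n - 1 - k) * v * u ^ k

theorem continuous_pairingSum (n : ℕ) : Continuous fun z : 𝔸 × 𝔸 => pairingSum n z.1 z.2 := by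
  unfold pairingSum
  fun_prop

theorem norm_pairingSum_le [NormOneClass 𝔸] (n : ℕ) {u v : 𝔸} {r : ℝ} (hu : ‖u‖ ≤ r)
    (hv : ‖v‖ ≤ r) : ‖pairingSum n u v‖ ≤ n * r ^ (n + 1) := by
  have hr : 0 ≤ r := (norm_nonneg u).trans hu
  have hpow (k : ℕ) : ‖u ^ k‖ ≤ r ^ k := (norm_pow_le u k).trans (by gcongr)
  suffices ∀ k ∈ Finset.range n, ‖v * u ^ (n - 1 - k) * v * u ^ k‖ ≤ r ^ (n + 1) by
    simpa [pairingSum] using norm_sum_le_of_le (Finset.range n) this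
  intro k hk
  have hk : n - 1 - k + k + 1 = n := by
    have := Finset.mem_range.1 hk
    omega
  calc ‖v * u ^ (n - 1 - k) * v * u ^ k‖
      ≤ ‖v‖ * ‖u ^ (n - 1 - k)‖ * ‖v‖ * ‖u ^ k‖ := by
        refine (norm_mul_le _ _).trans ?_
        gcongr
        refine (norm_mul_le _ _).trans ?_
        gcongr
        exact norm_mul_le _ _
    _ ≤ r * r ^ (n - 1 - k) * r * r ^ k := by
        gcongr
        exacts [hpow _, hpow _]
    _ = r ^ ((n - 1 - k + k + 1) + 1) := by ring
    _ = r ^ (n + 1) := by rw [hk]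

theorem hasDerivAt_mul_pow_of_rotation [NormedAlgebra ℝ 𝔸] {u v : ℝ → 𝔸} {θ : ℝ}
    (hu : HasDerivAt u (v θ) θ) (hv : HasDerivAt v (-u θ) θ) (n : ℕ) :
    HasDerivAt (fun t => v t * u t ^ n) (pairingSum n (u θ) (v θ) - u θ ^ (n + 1)) θ := by
  refine (hv.mul (hu.fun_pow' n)).congr_deriv ?_
  simp only [pairingSum, Finset.mul_sum, Nat.pred_eq_sub_one, ← mul_assoc, pow_succ', neg_mul]
  abel

section Rotation

variable {E : Type*} [NormedAddCommGroup E] [NormedSpace ℝ E]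

theorem norm_rotation_le (θ : ℝ) (z : E × E) :
    ‖ContinuousLinearMap.rotation θ z‖ ≤ 2 * ‖z‖ := by
  have hsmul {c : ℝ} {x : E} (hc : |c| ≤ 1) (hx : ‖x‖ ≤ ‖z‖) : ‖c • x‖ ≤ ‖z‖ := by
    rw [norm_smul, Real.norm_eq_abs]
    exact (mul_le_of_le_one_left (norm_nonneg x) hc).trans hx
  have hsin : |-sin θ| ≤ 1 := by simpa only [abs_neg] using abs_sin_le_one θ
  rw [two_mul, ContinuousLinearMap.rotation_apply]
  refine max_le ?_ ?_
  · exact norm_add_le_of_le (hsmul (abs_cos_le_one θ) (norm_fst_le z))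
      (hsmul (abs_sin_le_one θ) (norm_snd_le z))
  · exact norm_add_le_of_le (hsmul hsin (norm_fst_le z))
      (hsmul (abs_cos_le_one θ) (norm_snd_le z))

theorem hasDerivAt_rotation_fst (θ : ℝ) (z : E × E) :
    HasDerivAt (fun t => (ContinuousLinearMap.rotation t z).1)
      (ContinuousLinearMap.rotation θ z).2 θ :=
  ((hasDerivAt_cos θ).smul_const z.1).add ((hasDerivAt_sin θ).smul_const z.2)

theorem hasDerivAt_rotation_snd (θ : ℝ) (z : E × E) :
    HasDerivAt (fun t => (ContinuousLinearMap.rotation t z).2)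
      (-(ContinuousLinearMap.rotation θ z).1) θ := by
  refine (((hasDerivAt_sin θ).neg.smul_const z.1).add
    ((hasDerivAt_cos θ).smul_const z.2)).congr_deriv ?_
  simp only [ContinuousLinearMap.rotation_apply, neg_smul, neg_add]

variable [MeasurableSpace E] [BorelSpace E] [SecondCountableTopology E] [CompleteSpace E]
  {μ : Measure E} [IsGaussian μ]

theorem integrable_of_norm_le_mul_pow {G : Type*} [NormedAddCommGroup G] {h : E → G}
    (hh : Continuous h) {C : ℝ} {k : ℕ} (hb : ∀ x, ‖h x‖ ≤ C * ‖x‖ ^ k) : Integrable h μ := by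
  have hpow : Integrable (fun x : E => ‖x‖ ^ k) μ :=
    (IsGaussian.memLp_id μ k (ENNReal.natCast_ne_top k)).integrable_norm_pow'
  exact (hpow.const_mul C).mono' hh.aestronglyMeasurable (ae_of_all _ hb)

theorem integral_eq_zero_of_hasDerivAt_rotation (hμ : μ[id] = 0) {H H' : E × E → ℝ}
    (hH : Integrable H (μ.prod μ)) (hH' : Continuous H') {C : ℝ} {k : ℕ}
    (hC : 0 ≤ C) (hb : ∀ z, ‖H' z‖ ≤ C * ‖z‖ ^ k)
    (hd : ∀ θ z, HasDerivAt (fun t => H (ContinuousLinearMap.rotation t z))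
      (H' (ContinuousLinearMap.rotation θ z)) θ) :
    ∫ z, H' z ∂(μ.prod μ) = 0 := by
  have hrot (θ : ℝ) :
      MeasurePreserving (ContinuousLinearMap.rotation θ) (μ.prod μ) (μ.prod μ) :=
    ⟨(ContinuousLinearMap.rotation θ).continuous.measurable, IsGaussian.map_rotation_eq_self hμ θ⟩
  have hint (θ : ℝ) : Integrable (fun z => H (ContinuousLinearMap.rotation θ z)) (μ.prod μ) :=
    (hrot θ).integrable_comp_of_integrable hH
  have hconst (θ : ℝ) :
      ∫ z, H (ContinuousLinearMap.rotation θ z) ∂(μ.prod μ) = ∫ z, H z ∂(μ.prod μ) := by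
    rw [← integral_map (hrot θ).aemeasurable (by rw [(hrot θ).map_eq]; exact hH.1),
      (hrot θ).map_eq]
  have hbound (θ : ℝ) (z : E × E) :
      ‖H' (ContinuousLinearMap.rotation θ z)‖ ≤ C * 2 ^ k * ‖z‖ ^ k := by
    rw [mul_assoc, ← mul_pow]
    exact (hb _).trans (by gcongr; exact norm_rotation_le θ z)
  have hderiv := (hasDerivAt_integral_of_dominated_loc_of_deriv_le (x₀ := (0 : ℝ)) univ_mem
    (.of_forall fun θ => (hint θ).1) (hint 0) (by fun_prop)
    (ae_of_all _ fun z θ _ => hbound θ z)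
    (integrable_of_norm_le_mul_pow (by fun_prop) fun z => by
      rw [Real.norm_of_nonneg (by positivity)])
    (ae_of_all _ fun z θ _ => hd θ z)).2
  simp only [hconst] at hderiv
  simpa [ContinuousLinearMap.rotation_apply] using hderiv.unique (hasDerivAt_const 0 _)

end Rotation

variable [NormedAlgebra ℝ 𝔸] {E : Type*} [NormedAddCommGroup E] [NormedSpace ℝ E]

theorem continuous_map_pairingSum (L : E →L[ℝ] 𝔸) (τ : 𝔸 →L[ℝ] ℝ) (n : ℕ) :
    Continuous fun z : E × E => τ (pairingSum n (L z.1) (L z.2)) :=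
  τ.continuous.comp ((continuous_pairingSum n).comp (by fun_prop : Continuous (Prod.map L L)))

theorem hasDerivAt_map_mul_pow_rotation (L : E →L[ℝ] 𝔸) (τ : 𝔸 →L[ℝ] ℝ) (n : ℕ) (θ : ℝ)
    (z : E × E) :
    HasDerivAt (fun t => τ (L (ContinuousLinearMap.rotation t z).2
        * L (ContinuousLinearMap.rotation t z).1 ^ n))
      (τ (pairingSum n (L (ContinuousLinearMap.rotation θ z).1)
          (L (ContinuousLinearMap.rotation θ z).2))
        - τ (L (ContinuousLinearMap.rotation θ z).1 ^ (n + 1))) θ := by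
  have hu : HasDerivAt (fun t => L (ContinuousLinearMap.rotation t z).1) _ θ :=
    L.hasFDerivAt.comp_hasDerivAt θ (hasDerivAt_rotation_fst θ z)
  have hv : HasDerivAt (fun t => L (ContinuousLinearMap.rotation t z).2) _ θ :=
    L.hasFDerivAt.comp_hasDerivAt θ (hasDerivAt_rotation_snd θ z)
  rw [map_neg] at hv
  exact (τ.hasFDerivAt.comp_hasDerivAt θ
    (hasDerivAt_mul_pow_of_rotation hu hv n)).congr_deriv (map_sub _ _ _)

variable [NormOneClass 𝔸]

theorem norm_map_pairingSum_le (L : E →L[ℝ] 𝔸) (τ : 𝔸 →L[ℝ] ℝ) (n : ℕ) (z : E × E) :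
    ‖τ (pairingSum n (L z.1) (L z.2))‖ ≤ ‖τ‖ * n * ‖L‖ ^ (n + 1) * ‖z‖ ^ (n + 1) := by
  refine (τ.le_opNorm_of_le (norm_pairingSum_le n (L.le_opNorm_of_le (norm_fst_le z))
    (L.le_opNorm_of_le (norm_snd_le z)))).trans_eq ?_
  ring

variable [MeasurableSpace E] [BorelSpace E] [SecondCountableTopology E] [CompleteSpace E]
  {μ : Measure E} [IsGaussian μ]

theorem integrable_map_pow (L : E →L[ℝ] 𝔸) (τ : 𝔸 →L[ℝ] ℝ) (n : ℕ) :
    Integrable (fun x => τ (L x ^ n)) μ :=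
  integrable_of_norm_le_mul_pow (C := ‖τ‖ * ‖L‖ ^ n) (k := n) (by fun_prop) fun x => by
    refine (τ.le_opNorm_of_le ((norm_pow_le _ n).trans
      (pow_le_pow_left₀ (norm_nonneg _) (L.le_opNorm x) n))).trans_eq ?_
    ring

theorem integrable_map_pairingSum (L : E →L[ℝ] 𝔸) (τ : 𝔸 →L[ℝ] ℝ) (n : ℕ) :
    Integrable (fun z => τ (pairingSum n (L z.1) (L z.2))) (μ.prod μ) :=
  integrable_of_norm_le_mul_pow (continuous_map_pairingSum L τ n) (norm_map_pairingSum_le L τ n)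

theorem integral_map_pow_succ (hμ : μ[id] = 0) (L : E →L[ℝ] 𝔸)
    (τ : 𝔸 →L[ℝ] ℝ) (n : ℕ) :
    ∫ x, τ (L x ^ (n + 1)) ∂μ = ∫ z, τ (pairingSum n (L z.1) (L z.2)) ∂(μ.prod μ) := by
  have hpow_le (k : ℕ) (z : E × E) : ‖L z.1 ^ k‖ ≤ (‖L‖ * ‖z‖) ^ k :=
    (norm_pow_le _ k).trans
      (pow_le_pow_left₀ (norm_nonneg _) (L.le_opNorm_of_le (norm_fst_le z)) k)
  have hpow (z : E × E) :
      ‖τ (L z.1 ^ (n + 1))‖ ≤ ‖τ‖ * ‖L‖ ^ (n + 1) * ‖z‖ ^ (n + 1) := by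
    refine (τ.le_opNorm_of_le (hpow_le (n + 1) z)).trans_eq ?_
    ring
  have hword (z : E × E) :
      ‖τ (L z.2 * L z.1 ^ n)‖ ≤ ‖τ‖ * ‖L‖ ^ (n + 1) * ‖z‖ ^ (n + 1) := by
    refine (τ.le_opNorm_of_le ((norm_mul_le _ _).trans (mul_le_mul
      (L.le_opNorm_of_le (norm_snd_le z)) (hpow_le n z) (norm_nonneg _)
      (by positivity)))).trans_eq ?_
    ring
  have hzero : ∫ z, (τ (pairingSum n (L z.1) (L z.2)) - τ (L z.1 ^ (n + 1))) ∂(μ.prod μ) = 0 :=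
    integral_eq_zero_of_hasDerivAt_rotation hμ
      (integrable_of_norm_le_mul_pow (by fun_prop) hword)
      ((continuous_map_pairingSum L τ n).sub (by fun_prop)) (by positivity)
      (fun z => (norm_sub_le_of_le (norm_map_pairingSum_le L τ n z) (hpow z)).trans_eq
        (add_mul _ _ _).symm) (hasDerivAt_map_mul_pow_rotation L τ n)
  rw [integral_sub (integrable_map_pairingSum L τ n)
    ((integrable_map_pow L τ (n + 1)).comp_fst μ), sub_eq_zero] at hzero
  rw [hzero, integral_fun_fst fun x => τ (L x ^ (n + 1)), probReal_univ, one_smul]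

end IntegrationByParts

/-! ### Trace moments of Gaussian matrices -/

section GaussianMatrix

open scoped Matrix Matrix.Norms.L2Operator

variable {n : Type*} [Fintype n] {E : Type*} [NormedAddCommGroup E]
  [NormedSpace ℝ E] [MeasurableSpace E] [BorelSpace E] [SecondCountableTopology E]
  [CompleteSpace E] {μ : Measure E} [IsGaussian μ]

/-- The trace as a continuous linear functional on real square matrices. -/
def traceCLM (n : Type*) [Fintype n] : Matrix n n ℝ →L[ℝ] ℝ :=
  (Matrix.traceLinearMap n ℝ ℝ).toContinuousLinearMap

theorem integrable_frobeniusSq_map (L : E →L[ℝ] Matrix n n ℝ) :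
    Integrable (fun x => frobeniusSq (L x)) μ := by
  classical
  refine integrable_of_norm_le_mul_pow (C := ‖traceCLM n‖ * ‖L‖ ^ 2) (k := 2) ?_ fun x => ?_
  · unfold frobeniusSq
    fun_prop
  · refine ((traceCLM n).le_opNorm_of_le (?_ : ‖(L x)ᴴ * L x‖ ≤ _)).trans_eq
      (mul_assoc _ _ _).symm
    rw [Matrix.l2_opNorm_conjTranspose_mul_self, ← sq, ← mul_pow]
    exact pow_le_pow_left₀ (norm_nonneg _) (L.le_opNorm x) 2

theorem integrable_frobeniusSq_map_mul (L : E →L[ℝ] Matrix n n ℝ) (C : Matrix n n ℝ) :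
    Integrable (fun x => frobeniusSq (L x * C)) μ := by
  classical
  exact integrable_frobeniusSq_map ((ContinuousLinearMap.mul ℝ (Matrix n n ℝ)).flip C ∘L L)

variable [DecidableEq n]

theorem integrable_trace_map_pow_mul (L : E →L[ℝ] Matrix n n ℝ) (k : ℕ) (M : Matrix n n ℝ) :
    Integrable (fun x => (L x ^ k * M).trace) μ := by
  cases isEmpty_or_nonempty n
  · simp [Matrix.trace]
  · exact integrable_map_pow L (traceCLM n ∘L (ContinuousLinearMap.mul ℝ (Matrix n n ℝ)).flip M) k

theorem integrable_trace_sandwich_map_pow (L : E →L[ℝ] Matrix n n ℝ) (G : Matrix n n ℝ) (k : ℕ) :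
    Integrable (fun x => ((G * L x * G) ^ k).trace) μ := by
  have h := integrable_trace_map_pow_mul (μ := μ)
    (ContinuousLinearMap.mulLeftRight ℝ (Matrix n n ℝ) G G ∘L L) k 1
  simp only [mul_one] at h
  exact h

theorem trace_pairingSum_le {A B : Matrix n n ℝ} (hA : A.IsHermitian) (hB : B.IsHermitian)
    (q : ℕ) :
    (pairingSum (2 * q + 1) A B).trace ≤ 2 * (2 * q + 1) * frobeniusSq (B * A ^ q) := by
  have hfrob : frobeniusSq (B * A ^ q) = (B * B * A ^ (2 * q)).trace := by
    rw [frobeniusSq, Matrix.conjTranspose_mul, hB.eq, (hA.pow q).eq, two_mul, pow_add,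
      Matrix.trace_mul_comm]
    simp only [Matrix.mul_assoc, Matrix.trace_mul_comm B]
  have hword (k : ℕ) (hk : k ∈ Finset.range (2 * q + 1)) :
      (B * A ^ (2 * q + 1 - 1 - k) * B * A ^ k).trace ≤ 2 * (B * B * A ^ (2 * q)).trace :=
    trace_word_le hA hB (by have := Finset.mem_range.1 hk; omega)
  rw [pairingSum, Matrix.trace_sum, hfrob]
  refine (Finset.sum_le_card_nsmul _ _ _ hword).trans_eq ?_
  rw [Finset.card_range, nsmul_eq_mul]
  push_cast
  ring

theorem integral_trace_pairingSum_sandwich_le {W : E →L[ℝ] Matrix n n ℝ}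
    (hW : ∀ x, (W x).IsHermitian) {Γ : Matrix n n ℝ}
    (hΓ : ∀ C, ∫ x, frobeniusSq (W x * C) ∂μ ≤ 2 * (C * Cᴴ * Γ).trace)
    {G : Matrix n n ℝ} (hG : G.IsHermitian) (hGG : (1 - G * G).PosSemidef)
    {A : Matrix n n ℝ} (hA : A.IsHermitian) (q : ℕ)
    (hint : Integrable (fun y => (pairingSum (2 * q + 1) A (G * W y * G)).trace) μ) :
    ∫ y, (pairingSum (2 * q + 1) A (G * W y * G)).trace ∂μ
      ≤ 4 * (2 * q + 1) * (A ^ (2 * q) * (G * Γ * G)).trace := by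
  set C := G * A ^ q
  have hle (y : E) : (pairingSum (2 * q + 1) A (G * W y * G)).trace
      ≤ 2 * (2 * q + 1) * frobeniusSq (W y * C) := by
    refine (trace_pairingSum_le hA (isHermitian_mul_mul_self hG (hW y)) q).trans ?_
    gcongr
    simpa only [C, Matrix.mul_assoc] using frobeniusSq_mul_le (by rwa [hG.eq]) (W y * C)
  have htrace : (C * Cᴴ * Γ).trace = (A ^ (2 * q) * (G * Γ * G)).trace := by
    rw [Matrix.conjTranspose_mul, hG.eq, (hA.pow q).eq, two_mul, pow_add,
      Matrix.trace_mul_comm]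
    simp only [C, Matrix.mul_assoc, Matrix.trace_mul_comm Γ, Matrix.trace_mul_comm G]
  have hfrob : Integrable (fun y => frobeniusSq (W y * C)) μ := integrable_frobeniusSq_map_mul W C
  calc ∫ y, (pairingSum (2 * q + 1) A (G * W y * G)).trace ∂μ
      ≤ ∫ y, 2 * (2 * q + 1) * frobeniusSq (W y * C) ∂μ :=
        integral_mono hint (hfrob.const_mul _) hle
    _ = 2 * (2 * q + 1) * ∫ y, frobeniusSq (W y * C) ∂μ := integral_const_mul _ _
    _ ≤ 2 * (2 * q + 1) * (2 * (C * Cᴴ * Γ).trace) := by gcongr; exact hΓ C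
    _ = 4 * (2 * q + 1) * (A ^ (2 * q) * (G * Γ * G)).trace := by rw [htrace]; ring

theorem integral_trace_sandwich_pow_le (hμ : μ[id] = 0) {W : E →L[ℝ] Matrix n n ℝ}
    (hW : ∀ x, (W x).IsHermitian) {Γ : Matrix n n ℝ}
    (hΓ : ∀ C, ∫ x, frobeniusSq (W x * C) ∂μ ≤ 2 * (C * Cᴴ * Γ).trace)
    {G : Matrix n n ℝ} (hG : G.IsHermitian) (hGG : (1 - G * G).PosSemidef) (q : ℕ) :
    ∫ x, ((G * W x * G) ^ (2 * (q + 1))).trace ∂μ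
      ≤ 4 * (2 * q + 1) * ∫ x, ((G * W x * G) ^ (2 * q) * (G * Γ * G)).trace ∂μ := by
  cases isEmpty_or_nonempty n
  · simp [Matrix.trace]
  set L : E →L[ℝ] Matrix n n ℝ := ContinuousLinearMap.mulLeftRight ℝ (Matrix n n ℝ) G G ∘L W
  have hpair := integrable_map_pairingSum (μ := μ) L (traceCLM n) (2 * q + 1)
  have hIBP : ∫ x, (L x ^ (2 * (q + 1))).trace ∂μ
      = ∫ x, ∫ y, (pairingSum (2 * q + 1) (L x) (L y)).trace ∂μ ∂μ :=
    (integral_map_pow_succ hμ L (traceCLM n) (2 * q + 1)).trans (integral_prod _ hpair)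
  change ∫ x, (L x ^ (2 * (q + 1))).trace ∂μ ≤ _
  rw [hIBP, ← integral_const_mul]
  refine integral_mono_ae hpair.integral_prod_left
    ((integrable_trace_map_pow_mul L (2 * q) (G * Γ * G)).const_mul _) ?_
  filter_upwards [hpair.prod_right_ae] with x hx
  exact integral_trace_pairingSum_sandwich_le hW hΓ hG hGG (isHermitian_mul_mul_self hG (hW x)) q hx

theorem integral_trace_sandwich_pow_le_of_forall_le (hμ : μ[id] = 0) {W : E →L[ℝ] Matrix n n ℝ}
    (hW : ∀ x, (W x).IsHermitian) {Γ : Matrix n n ℝ}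
    (hΓ : ∀ C, ∫ x, frobeniusSq (W x * C) ∂μ ≤ 2 * (C * Cᴴ * Γ).trace)
    {G : Matrix n n ℝ} (hG : G.IsHermitian) (hGG : (1 - G * G).PosSemidef) {q : ℕ} {a b : ℝ}
    (ha : 4 * (2 * q + 1) * a ≤ 1 / 2)
    (hab : ∀ A : Matrix n n ℝ, A.IsHermitian →
      (A ^ (2 * q) * (G * Γ * G)).trace ≤ a * (A ^ (2 * (q + 1))).trace + b) :
    ∫ x, ((G * W x * G) ^ (2 * (q + 1))).trace ∂μ ≤ 8 * (2 * q + 1) * b := by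
  set L : E →L[ℝ] Matrix n n ℝ := ContinuousLinearMap.mulLeftRight ℝ (Matrix n n ℝ) G G ∘L W
  have hL (x : E) : (L x).IsHermitian := isHermitian_mul_mul_self hG (hW x)
  have hint : Integrable (fun x => (L x ^ (2 * (q + 1))).trace) μ :=
    integrable_trace_sandwich_map_pow W G (2 * (q + 1))
  set T := ∫ x, (L x ^ (2 * (q + 1))).trace ∂μ
  have hT : 0 ≤ T := integral_nonneg fun x => by
    have h := trace_pow_two_mul_mul_nonneg (hL x) Matrix.PosSemidef.one (q + 1)
    rwa [mul_one] at h
  have hstep : T ≤ 4 * (2 * q + 1) * (a * T + b) := by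
    refine (integral_trace_sandwich_pow_le hμ hW hΓ hG hGG q).trans ?_
    gcongr
    calc ∫ x, (L x ^ (2 * q) * (G * Γ * G)).trace ∂μ
        ≤ ∫ x, (a * (L x ^ (2 * (q + 1))).trace + b) ∂μ :=
          integral_mono (integrable_trace_map_pow_mul L _ _)
            ((hint.const_mul a).add (integrable_const b)) fun x => hab _ (hL x)
      _ = a * T + b := by
          rw [integral_add (hint.const_mul a) (integrable_const b), integral_const_mul,
            integral_const, probReal_univ, one_smul]
  change T ≤ _
  nlinarith

end GaussianMatrix

/-! ### Spectral bounds -/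

section SpectralBounds

variable {N : ℕ} {A G : Matrix (Fin N) (Fin N) ℝ}

theorem trace_mul_bicosMatrix_mul_le (hGG : (1 - G * G).PosSemidef) (p : ℝ × ℝ) :
    (G * bicosMatrix N p * G).trace ≤ 2 * N := by
  have h := trace_mul_nonneg_of_posSemidef hGG (posSemidef_bicosMatrix p)
  rwa [sub_mul, one_mul, Matrix.trace_sub, sub_nonneg, trace_bicosMatrix, mul_assoc,
    Matrix.trace_mul_comm] at h

theorem setIntegral_trace_pow_mul_bicosMatrix_le (hA : A.IsHermitian)
    (hGG : (1 - G * G).PosSemidef) (q : ℕ) :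
    ∫ p in specBox, (A ^ (2 * q) * (G * bicosMatrix N p * G)).trace
      ≤ 8 * π ^ 2 * (A ^ (2 * q)).trace := by
  have hcyc : (G * A ^ (2 * q) * G).trace = (A ^ (2 * q) * (G * G)).trace := by
    rw [mul_assoc, Matrix.trace_mul_comm, mul_assoc]
  simp only [trace_mul_mul_mul_self]
  rw [← trace_mul_cosGram, cosGram_restrict_specBox, Matrix.mul_smul, mul_one, Matrix.trace_smul,
    smul_eq_mul, hcyc]
  gcongr
  exact trace_pow_mul_le_of_posSemidef_one_sub hA hGG q

theorem setIntegral_mul_trace_pow_mul_bicosMatrix_le {f : ℝ × ℝ → ℝ} (hf : ∀ p, 0 ≤ f p) {q : ℕ}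
    (hf₁ : Integrable f (volume.restrict specBox))
    (hfq : Integrable (fun p => f p ^ (q + 1)) (volume.restrict specBox))
    (hA : A.IsHermitian) (hG : G.IsHermitian) (hGG : (1 - G * G).PosSemidef) {η : ℝ}
    (hη : 0 < η) :
    ∫ p in specBox, f p * (A ^ (2 * q) * (G * bicosMatrix N p * G)).trace
      ≤ η * (8 * π ^ 2) * (A ^ (2 * (q + 1))).trace
        + η⁻¹ ^ q * (∫ p in specBox, f p ^ (q + 1)) * (2 * N) := by
  have hpoint (p : ℝ × ℝ) : f p * (A ^ (2 * q) * (G * bicosMatrix N p * G)).trace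
      ≤ η * (A ^ (2 * (q + 1)) * (G * bicosMatrix N p * G)).trace
        + η⁻¹ ^ q * f p ^ (q + 1) * (2 * N) := by
    have hS : (G * bicosMatrix N p * G).PosSemidef := by
      simpa only [hG.eq] using (posSemidef_bicosMatrix p).conjTranspose_mul_mul_same G
    refine (mul_trace_pow_mul_le hA hS (hf p) hη q).trans ?_
    have := hf p
    gcongr
    exact trace_mul_bicosMatrix_mul_le hGG p
  have hleft : Integrable (fun p => f p * (A ^ (2 * q) * (G * bicosMatrix N p * G)).trace)
      (volume.restrict specBox) := by
    simpa only [trace_mul_mul_mul_self] using integrable_mul_trace_mul_bicosMatrix hf₁ _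
  have hmain : Integrable (fun p => η * (A ^ (2 * (q + 1)) * (G * bicosMatrix N p * G)).trace)
      (volume.restrict specBox) := by
    simpa only [trace_mul_mul_mul_self] using
      (integrable_trace_mul_bicosMatrix _ _).const_mul η
  have herr := (hfq.const_mul (η⁻¹ ^ q)).mul_const (2 * (N : ℝ))
  refine (integral_mono hleft (hmain.add herr) hpoint).trans ?_
  simp only [Pi.add_apply]
  rw [integral_add hmain herr, integral_const_mul, integral_mul_const, integral_const_mul,
    mul_assoc η]
  gcongr
  exact setIntegral_trace_pow_mul_bicosMatrix_le hA hGG (q + 1)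

end SpectralBounds

namespace SpectralDecomp

variable {Ω : Type*} [MeasurableSpace Ω] {P : Measure Ω} {X : ℤ → ℤ → Ω → ℝ}
  {ν νd : Measure (ℝ × ℝ)} {f : ℝ × ℝ → ℝ}

theorem isFiniteMeasure_discrete (hν : SpectralDecomp P X ν νd f) : IsFiniteMeasure νd := by
  have := hν.finite
  exact isFiniteMeasure_of_le ν (hν.decomp ▸ Measure.le_add_left le_rfl)

theorem lintegral_density_lt_top (hν : SpectralDecomp P X ν νd f) :
    ∫⁻ p in specBox, ENNReal.ofReal (f p) < ⊤ := by
  have := hν.finite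
  calc ∫⁻ p in specBox, ENNReal.ofReal (f p)
      = (volume.restrict specBox).withDensity (fun p => ENNReal.ofReal (f p)) Set.univ := by
        rw [withDensity_apply _ MeasurableSet.univ, Measure.restrict_univ]
    _ ≤ ν Set.univ := by
        rw [hν.decomp, Measure.add_apply]
        exact le_self_add
    _ < ⊤ := measure_lt_top ν _

theorem integrable_density_pow (hν : SpectralDecomp P X ν νd f) {m : ℕ}
    (hfm : ∫⁻ p in specBox, ENNReal.ofReal (f p) ^ m < ⊤) :
    Integrable (fun p => f p ^ m) (volume.restrict specBox) := by
  refine ⟨(hν.f_meas.pow_const m).aestronglyMeasurable, ?_⟩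
  rw [hasFiniteIntegral_iff_ofReal (ae_of_all _ fun p => pow_nonneg (hν.f_nonneg p) m)]
  simpa only [ENNReal.ofReal_pow (hν.f_nonneg _)] using hfm

theorem integrable_density (hν : SpectralDecomp P X ν νd f) :
    Integrable f (volume.restrict specBox) := by
  simpa only [pow_one] using
    hν.integrable_density_pow (m := 1) (by simpa only [pow_one] using hν.lintegral_density_lt_top)

theorem trace_mul_cosGram_eq (hν : SpectralDecomp P X ν νd f) {N : ℕ}
    (M : Matrix (Fin N) (Fin N) ℝ) :
    (M * cosGram ν N).trace
      = (∫ p in specBox, f p * (M * bicosMatrix N p).trace) + (M * cosGram νd N).trace := by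
  have := hν.isFiniteMeasure_discrete
  have := isFiniteMeasure_withDensity_ofReal hν.integrable_density.2
  rw [hν.decomp, cosGram_add, mul_add, Matrix.trace_add, trace_mul_cosGram,
    integral_withDensity_eq_integral_toReal_smul hν.f_meas.ennreal_ofReal
      (ae_of_all _ fun _ => ENNReal.ofReal_lt_top)]
  simp only [ENNReal.toReal_ofReal (hν.f_nonneg _), smul_eq_mul]

theorem trace_pow_mul_cosGram_le (hν : SpectralDecomp P X ν νd f) {q : ℕ}
    (hfq : Integrable (fun p => f p ^ (q + 1)) (volume.restrict specBox)) {N : ℕ}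
    {A G : Matrix (Fin N) (Fin N) ℝ} (hA : A.IsHermitian) (hG : G.IsHermitian)
    (hGG : (1 - G * G).PosSemidef) (hGd : (1 - G * cosGram νd N * G).PosSemidef)
    {η : ℝ} (hη : 0 < η) :
    (A ^ (2 * q) * (G * cosGram ν N * G)).trace
      ≤ η * (8 * π ^ 2 + 1) * (A ^ (2 * (q + 1))).trace
        + η⁻¹ ^ q * (2 * (∫ p in specBox, f p ^ (q + 1)) + 1) * N := by
  have hac := setIntegral_mul_trace_pow_mul_bicosMatrix_le hν.f_nonneg hν.integrable_density hfq
    hA hG hGG hη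
  have hd := trace_pow_mul_le_mul_trace_pow_succ_add hA hGd hη q
  rw [Fintype.card_fin, trace_mul_mul_mul_self] at hd
  simp only [trace_mul_mul_mul_self (A ^ _)] at hac ⊢
  rw [hν.trace_mul_cosGram_eq]
  linarith

end SpectralDecomp

/-! ### The sampled field -/

section Field

open scoped Matrix

variable {Ω : Type*} {X : ℤ → ℤ → Ω → ℝ}

/-- The window `(X_{i,j})_{1 ≤ i,j ≤ N}` of the field as an `N × N` matrix. -/
def windowMatrix (X : ℤ → ℤ → Ω → ℝ) (N : ℕ) (ω : Ω) : Matrix (Fin N) (Fin N) ℝ :=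
  Matrix.of fun i j => X ((i : ℕ) + 1) ((j : ℕ) + 1) ω

/-- The window `(X_{i,j})_{1 ≤ i,j ≤ N}` of the field as a vector. It serves as a Gaussian vector
in place of `windowMatrix` because `Matrix` carries no measurable structure. -/
def windowVec (X : ℤ → ℤ → Ω → ℝ) (N : ℕ) (ω : Ω) : Fin N × Fin N → ℝ :=
  fun i => windowMatrix X N ω i.1 i.2

/-- The sum `Y Yᴴ + Yᴴ Y` of the Gram matrices of the rows and of the columns of the window `Y`. -/
def windowGram (X : ℤ → ℤ → Ω → ℝ) (N : ℕ) (ω : Ω) : Matrix (Fin N) (Fin N) ℝ :=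
  windowMatrix X N ω * (windowMatrix X N ω)ᴴ + (windowMatrix X N ω)ᴴ * windowMatrix X N ω

/-- The linear map turning the window of the field into the matrix `scaledW`. -/
def scaledSymmCLM (N : ℕ) : (Fin N × Fin N → ℝ) →L[ℝ] Matrix (Fin N) (Fin N) ℝ :=
  LinearMap.toContinuousLinearMap
    { toFun := fun y => Matrix.of fun i j => (√N)⁻¹ * (y (i, j) + y (j, i))
      map_add' := fun y z => Matrix.ext fun i j => by
        simp only [Matrix.of_apply, Matrix.add_apply, Pi.add_apply]
        ring
      map_smul' := fun c y => Matrix.ext fun i j => by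
        simp only [Matrix.of_apply, Matrix.smul_apply, Pi.smul_apply, smul_eq_mul, RingHom.id_apply]
        ring }

theorem windowGram_apply (N : ℕ) (ω : Ω) (k l : Fin N) :
    windowGram X N ω k l = ∑ i, (windowMatrix X N ω k i * windowMatrix X N ω l i
      + windowMatrix X N ω i k * windowMatrix X N ω i l) := by
  simp only [windowGram, Matrix.add_apply, Matrix.mul_apply, Matrix.conjTranspose_apply,
    star_trivial, Finset.sum_add_distrib]

theorem scaledSymmCLM_windowVec (N : ℕ) (ω : Ω) :
    scaledSymmCLM N (windowVec X N ω) = scaledW X N ω := rfl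

theorem isHermitian_scaledSymmCLM {N : ℕ} (y : Fin N × Fin N → ℝ) :
    (scaledSymmCLM N y).IsHermitian :=
  Matrix.IsHermitian.ext fun i j => congrArg ((√N)⁻¹ * ·) (add_comm (y (j, i)) (y (i, j)))

theorem isHermitian_scaledW (N : ℕ) (ω : Ω) : (scaledW X N ω).IsHermitian :=
  isHermitian_scaledSymmCLM (windowVec X N ω)

theorem scaledW_eq_smul_add_conjTranspose (N : ℕ) (ω : Ω) :
    scaledW X N ω = (√N)⁻¹ • (windowMatrix X N ω + (windowMatrix X N ω)ᴴ) := by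
  ext i j
  simp [scaledW, windowMatrix]

theorem frobeniusSq_add_conjTranspose_mul_le {n : Type*} [Fintype n] (Y C : Matrix n n ℝ) :
    frobeniusSq ((Y + Yᴴ) * C) ≤ 2 * (C * Cᴴ * (Y * Yᴴ + Yᴴ * Y)).trace := by
  have hY : (C * Cᴴ * (Y * Yᴴ + Yᴴ * Y)).trace = frobeniusSq (Yᴴ * C) + frobeniusSq (Y * C) := by
    simp only [frobeniusSq, Matrix.conjTranspose_mul, Matrix.conjTranspose_conjTranspose, mul_add,
      Matrix.trace_add]
    congr 1 <;> rw [Matrix.mul_assoc, Matrix.trace_mul_comm] <;> simp only [Matrix.mul_assoc]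
  rw [hY, add_comm Y, add_mul]
  simp only [frobeniusSq_eq_sum, ← Finset.sum_add_distrib, Finset.mul_sum]
  gcongr with i _ j _
  exact add_sq_le

theorem frobeniusSq_scaledW_mul_le (N : ℕ) (ω : Ω) (C : Matrix (Fin N) (Fin N) ℝ) :
    frobeniusSq (scaledW X N ω * C) ≤ 2 * ((N : ℝ)⁻¹ * (C * Cᴴ * windowGram X N ω).trace) := by
  have hsq : (√N)⁻¹ * (√N)⁻¹ = (N : ℝ)⁻¹ := by
    rw [← mul_inv, Real.mul_self_sqrt N.cast_nonneg]
  rw [scaledW_eq_smul_add_conjTranspose, Matrix.smul_mul, frobeniusSq, Matrix.conjTranspose_smul,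
    star_trivial, Matrix.smul_mul, Matrix.mul_smul, smul_smul, hsq, Matrix.trace_smul, smul_eq_mul,
    mul_left_comm]
  gcongr
  exact frobeniusSq_add_conjTranspose_mul_le _ C

end Field

namespace StatGauss

open scoped Matrix

variable {Ω : Type*} [MeasurableSpace Ω] {P : Measure Ω} {X : ℤ → ℤ → Ω → ℝ}

theorem exists_map_dual_eq_gaussianReal (hX : StatGauss P X) {ι : Type*} [Finite ι]
    (e : ι → ℤ × ℤ) (L : (ι → ℝ) →L[ℝ] ℝ) :
    ∃ v : NNReal, P.map (fun ω => L fun i => X (e i).1 (e i).2 ω) = gaussianReal 0 v := by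
  classical
  cases nonempty_fintype ι
  let c : ι →₀ ℝ := Finsupp.equivFunOnFinite.symm fun i =>
    L fun j => if i = j then 1 else 0
  obtain ⟨v, hv⟩ := hX.gauss (c.mapDomain e)
  refine ⟨v, hv ▸ congrArg (P.map ·) (funext fun ω => ?_)⟩
  calc L (fun i => X (e i).1 (e i).2 ω)
      = ∑ i, c i * X (e i).1 (e i).2 ω :=
        (L.toLinearMap.pi_apply_eq_sum_univ _).trans (Finset.sum_congr rfl fun i _ => mul_comm _ _)
    _ = c.sum fun i a => a * X (e i).1 (e i).2 ω :=
        (Finsupp.sum_fintype c (fun i a => a * X (e i).1 (e i).2 ω) fun i => zero_mul _).symm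
    _ = (c.mapDomain e).sum fun p a => a * X p.1 p.2 ω :=
        (Finsupp.sum_mapDomain_index (h := fun (p : ℤ × ℤ) a => a * X p.1 p.2 ω)
          (fun p => zero_mul _) fun p a b => add_mul a b _).symm

theorem hasGaussianLaw (hX : StatGauss P X) (j k : ℤ) : HasGaussianLaw (X j k) P := by
  obtain ⟨v, hv⟩ := hX.exists_map_dual_eq_gaussianReal (fun _ : Unit => (j, k))
    (ContinuousLinearMap.proj ())
  exact ⟨(hv : P.map (X j k) = _) ▸ inferInstance⟩

theorem integral_eq_zero (hX : StatGauss P X) (j k : ℤ) : ∫ ω, X j k ω ∂P = 0 := by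
  obtain ⟨v, hv⟩ := hX.exists_map_dual_eq_gaussianReal (fun _ : Unit => (j, k))
    (ContinuousLinearMap.proj ())
  have hlaw : HasLaw (X j k) (gaussianReal 0 v) P := ⟨(hX.meas j k).aemeasurable, hv⟩
  rw [hlaw.integral_eq, integral_id_gaussianReal]

theorem integrable_mul (hX : StatGauss P X) (j k j' k' : ℤ) :
    Integrable (fun ω => X j k ω * X j' k' ω) P :=
  (hX.hasGaussianLaw j k).memLp_two.integrable_mul (hX.hasGaussianLaw j' k').memLp_two

theorem measurable_windowVec (hX : StatGauss P X) (N : ℕ) : Measurable (windowVec X N) :=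
  measurable_pi_lambda _ fun _ => hX.meas _ _

theorem isGaussian_map_windowVec (hX : StatGauss P X) (N : ℕ) :
    IsGaussian (P.map (windowVec X N)) := by
  refine isGaussian_of_map_eq_gaussianReal fun L => ?_
  obtain ⟨v, hv⟩ := hX.exists_map_dual_eq_gaussianReal
    (fun i : Fin N × Fin N => ((i.1 : ℕ) + 1, (i.2 : ℕ) + 1)) L
  rw [Measure.map_map L.measurable (hX.measurable_windowVec N)]
  exact ⟨0, v, hv⟩

theorem integral_id_map_windowVec (hX : StatGauss P X) (N : ℕ) :
    (P.map (windowVec X N))[id] = 0 := by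
  rw [integral_map (hX.measurable_windowVec N).aemeasurable aestronglyMeasurable_id]
  ext i
  exact (eval_integral (fun i => (hX.hasGaussianLaw _ _).integrable) i).trans
    (hX.integral_eq_zero _ _)

variable {ν νd : Measure (ℝ × ℝ)} {f : ℝ × ℝ → ℝ}

theorem integral_mul_eq (hX : StatGauss P X) (hν : SpectralDecomp P X ν νd f) (j k j' k' : ℤ) :
    ∫ ω, X j k ω * X j' k' ω ∂P = ∫ p, cos ((j - j') * p.1 + (k - k') * p.2) ∂ν := by
  have := hν.finite
  have hstat := hX.stat j' k' (j - j') (k - k')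
  rw [add_sub_cancel, add_sub_cancel] at hstat
  simp only [mul_comm (X j k _), hstat]
  have hint : Integrable (fun p : ℝ × ℝ => Complex.exp (Complex.I * (((j - j' : ℤ) * p.1
      + (k - k' : ℤ) * p.2 : ℝ) : ℂ))) ν := by
    refine Integrable.of_bound (C := 1) (by fun_prop) (ae_of_all _ fun p => ?_)
    rw [mul_comm, Complex.norm_exp_ofReal_mul_I]
  have h := congrArg Complex.re (hν.herglotz (j - j') (k - k'))
  rw [Complex.ofReal_re, ← RCLike.re_eq_complex_re, ← integral_re hint] at h
  refine h.symm.trans (integral_congr_ae (ae_of_all _ fun p => ?_))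
  beta_reduce
  rw [RCLike.re_eq_complex_re, mul_comm, Complex.exp_ofReal_mul_I_re, Int.cast_sub, Int.cast_sub]

theorem integral_windowGram_apply (hX : StatGauss P X) (hν : SpectralDecomp P X ν νd f) {N : ℕ}
    (k l : Fin N) : ∫ ω, windowGram X N ω k l ∂P = N * cosGram ν N k l := by
  have := hν.finite
  have hint (a b c d : Fin N) : Integrable (fun ω => windowMatrix X N ω a b
      * windowMatrix X N ω c d) P := hX.integrable_mul _ _ _ _
  have hsum (i : Fin N) : Integrable (fun ω => windowMatrix X N ω k i * windowMatrix X N ω l i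
      + windowMatrix X N ω i k * windowMatrix X N ω i l) P := (hint k i l i).add (hint i k i l)
  have hcos (a b : ℝ) : Integrable (fun p : ℝ × ℝ => cos (a * p.1 + b * p.2)) ν :=
    Integrable.of_bound (C := 1) (by fun_prop) (ae_of_all _ fun p => abs_cos_le_one _)
  have hterm (i : Fin N) : ∫ ω, (windowMatrix X N ω k i * windowMatrix X N ω l i
      + windowMatrix X N ω i k * windowMatrix X N ω i l) ∂P = cosGram ν N k l := by
    rw [integral_add (hint k i l i) (hint i k i l)]
    simp only [windowMatrix, Matrix.of_apply]
    rw [hX.integral_mul_eq hν, hX.integral_mul_eq hν, ← integral_add (hcos _ _) (hcos _ _)]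
    simp [cosGram, bicosMatrix, cosMatrix]
  simp only [windowGram_apply]
  rw [integral_finsetSum _ fun i _ => hsum i]
  simp only [hterm, Finset.sum_const, Finset.card_univ, Fintype.card_fin, nsmul_eq_mul]

theorem integrable_windowGram_apply (hX : StatGauss P X) {N : ℕ} (k l : Fin N) :
    Integrable (fun ω => windowGram X N ω k l) P := by
  simp only [windowGram_apply]
  exact integrable_finsetSum _ fun i _ =>
    (hX.integrable_mul _ _ _ _).add (hX.integrable_mul _ _ _ _)

theorem integrable_trace_mul_windowGram (hX : StatGauss P X) {N : ℕ}
    (M : Matrix (Fin N) (Fin N) ℝ) : Integrable (fun ω => (M * windowGram X N ω).trace) P := by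
  simp only [Matrix.trace, Matrix.diag_apply, Matrix.mul_apply]
  exact integrable_finsetSum _ fun k _ => integrable_finsetSum _ fun l _ =>
    (hX.integrable_windowGram_apply l k).const_mul _

theorem integral_trace_mul_windowGram (hX : StatGauss P X) (hν : SpectralDecomp P X ν νd f) {N : ℕ}
    (M : Matrix (Fin N) (Fin N) ℝ) :
    ∫ ω, (M * windowGram X N ω).trace ∂P = N * (M * cosGram ν N).trace := by
  have hgram : (Matrix.of fun k l => ∫ ω, windowGram X N ω k l ∂P) = (N : ℝ) • cosGram ν N :=
    Matrix.ext fun k l => hX.integral_windowGram_apply hν k l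
  rw [integral_trace_mul hX.integrable_windowGram_apply, hgram, Matrix.mul_smul, Matrix.trace_smul,
    smul_eq_mul]

theorem integral_scaledW {N : ℕ} (hX : StatGauss P X) {φ : Matrix (Fin N) (Fin N) ℝ → ℝ}
    (hφ : Continuous φ) :
    ∫ y, φ (scaledSymmCLM N y) ∂P.map (windowVec X N) = ∫ ω, φ (scaledW X N ω) ∂P :=
  integral_map (hX.measurable_windowVec N).aemeasurable
    (hφ.comp (scaledSymmCLM N).continuous).aestronglyMeasurable

theorem integrable_frobeniusSq_scaledW_mul (hX : StatGauss P X) {N : ℕ}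
    (C : Matrix (Fin N) (Fin N) ℝ) : Integrable (fun ω => frobeniusSq (scaledW X N ω * C)) P := by
  have := hX.isGaussian_map_windowVec N
  have h := (integrable_frobeniusSq_map_mul (μ := P.map (windowVec X N)) (scaledSymmCLM N)
    C).comp_measurable (hX.measurable_windowVec N)
  simpa only [Function.comp_def, scaledSymmCLM_windowVec] using h

theorem integral_frobeniusSq_scaledW_mul_le (hX : StatGauss P X) (hν : SpectralDecomp P X ν νd f)
    {N : ℕ} (C : Matrix (Fin N) (Fin N) ℝ) :
    ∫ ω, frobeniusSq (scaledW X N ω * C) ∂P ≤ 2 * (C * Cᴴ * cosGram ν N).trace := by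
  have hint : Integrable (fun ω => 2 * ((N : ℝ)⁻¹ * (C * Cᴴ * windowGram X N ω).trace)) P :=
    ((hX.integrable_trace_mul_windowGram _).const_mul _).const_mul _
  refine (integral_mono (hX.integrable_frobeniusSq_scaledW_mul C) hint
    fun ω => frobeniusSq_scaledW_mul_le N ω C).trans ?_
  rw [integral_const_mul, integral_const_mul, hX.integral_trace_mul_windowGram hν]
  rcases N.eq_zero_or_pos with rfl | hN
  · simp [Matrix.trace]
  · rw [inv_mul_cancel_left₀ (by positivity)]

theorem integrable_trace_sandwich_scaledW_pow (hX : StatGauss P X) {N : ℕ}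
    (G : Matrix (Fin N) (Fin N) ℝ) (k : ℕ) :
    Integrable (fun ω => ((G * scaledW X N ω * G) ^ k).trace) P := by
  have := hX.isGaussian_map_windowVec N
  have h := (integrable_trace_sandwich_map_pow (μ := P.map (windowVec X N)) (scaledSymmCLM N) G
    k).comp_measurable (hX.measurable_windowVec N)
  simpa only [Function.comp_def, scaledSymmCLM_windowVec] using h

theorem integrable_frobeniusSq_scaledW (hX : StatGauss P X) (N : ℕ) :
    Integrable (fun ω => frobeniusSq (scaledW X N ω)) P := by
  simpa only [mul_one] using hX.integrable_frobeniusSq_scaledW_mul (1 : Matrix (Fin N) (Fin N) ℝ)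

theorem integral_frobeniusSq_scaledW_le (hX : StatGauss P X) (hν : SpectralDecomp P X ν νd f)
    (N : ℕ) : ∫ ω, frobeniusSq (scaledW X N ω) ∂P ≤ 4 * ν.real Set.univ * N := by
  have := hν.finite
  have h := hX.integral_frobeniusSq_scaledW_mul_le hν (1 : Matrix (Fin N) (Fin N) ℝ)
  rw [Matrix.conjTranspose_one, one_mul, trace_mul_cosGram] at h
  simp only [mul_one, one_mul, trace_bicosMatrix, integral_const, smul_eq_mul] at h
  linarith

theorem exists_integral_trace_sandwich_pow_le (hX : StatGauss P X)
    (hν : SpectralDecomp P X ν νd f) {q : ℕ}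
    (hfq : Integrable (fun p => f p ^ (q + 1)) (volume.restrict specBox)) :
    ∃ C : ℝ, 0 ≤ C ∧ ∀ (N : ℕ) (G : Matrix (Fin N) (Fin N) ℝ), G.IsHermitian →
      (1 - G * G).PosSemidef → (1 - G * cosGram νd N * G).PosSemidef →
      ∫ ω, ((G * scaledW X N ω * G) ^ (2 * (q + 1))).trace ∂P ≤ C * N := by
  set F := ∫ p in specBox, f p ^ (q + 1)
  have hF : 0 ≤ F := integral_nonneg fun p => pow_nonneg (hν.f_nonneg p) _
  set η : ℝ := (8 * (2 * q + 1) * (8 * π ^ 2 + 1))⁻¹ with hη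
  refine ⟨8 * (2 * q + 1) * (η⁻¹ ^ q * (2 * F + 1)), by positivity, fun N G hG hGG hGd => ?_⟩
  have := hX.isGaussian_map_windowVec N
  have ha : 4 * (2 * q + 1) * (η * (8 * π ^ 2 + 1)) ≤ 1 / 2 := by
    rw [hη]
    field_simp
    norm_num
  have hcont : Continuous fun W : Matrix (Fin N) (Fin N) ℝ =>
      ((G * W * G) ^ (2 * (q + 1))).trace := by fun_prop
  refine (hX.integral_scaledW hcont).symm.trans_le ?_
  rw [mul_assoc _ _ (N : ℝ)]
  refine integral_trace_sandwich_pow_le_of_forall_le (hX.integral_id_map_windowVec N)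
    isHermitian_scaledSymmCLM (fun C => ?_) hG hGG ha
    fun A hA => hν.trace_pow_mul_cosGram_le hfq hA hG hGG hGd (by positivity)
  have hcontC : Continuous fun W : Matrix (Fin N) (Fin N) ℝ => frobeniusSq (W * C) := by
    unfold frobeniusSq
    fun_prop
  exact (hX.integral_scaledW hcontC).trans_le (hX.integral_frobeniusSq_scaledW_mul_le hν C)

end StatGauss

/-! ### Passage to the limit -/

theorem ESDTendstoInProb.integral_le {Ω : Type*} [MeasurableSpace Ω] {P : Measure Ω}
    [IsProbabilityMeasure P] {A : (N : ℕ) → Ω → Matrix (Fin N) (Fin N) ℝ} {μ : Measure ℝ}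
    (hA : ESDTendstoInProb P A μ) {g : ℝ → ℝ} (hg : Continuous g) (hgC : ∃ C, ∀ x, |g x| ≤ C)
    {Ψ : ℕ → Ω → ℝ} (hΨ0 : ∀ N ω, 0 ≤ Ψ N ω) (hΨi : ∀ N, Integrable (Ψ N) P)
    (hle : ∀ N ω, esdEval (A N ω) g ≤ Ψ N ω) {b : ℝ} (hb : ∀ᶠ N in atTop, ∫ ω, Ψ N ω ∂P ≤ b) :
    ∫ x, g x ∂μ ≤ b := by
  refine le_of_forall_pos_le_add fun ε hε => ?_
  have hb0 : 0 ≤ b := by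
    obtain ⟨N, hN⟩ := hb.exists
    exact (integral_nonneg (hΨ0 N)).trans hN
  set t := b + ε / 2
  have ht : 0 < t := by positivity
  have hbt : 0 < 1 - b / t := by
    rw [sub_pos, div_lt_one ht]
    exact lt_add_of_pos_right b (half_pos hε)
  have hdev : Tendsto (fun N => P.real {ω | ε / 2 ≤ |esdEval (A N ω) g - ∫ x, g x ∂μ|}) atTop
      (nhds 0) := (ENNReal.tendsto_toReal ENNReal.zero_ne_top).comp (hA g hg hgC _ (half_pos hε))
  obtain ⟨N, hN, hNb⟩ := ((hdev.eventually_lt_const hbt).and hb).exists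
  have hmarkov : P.real {ω | t ≤ Ψ N ω} ≤ b / t := by
    rw [le_div_iff₀' ht]
    exact (mul_meas_ge_le_integral_of_nonneg (ae_of_all _ (hΨ0 N)) (hΨi N) t).trans hNb
  obtain ⟨ω, hω⟩ : ∃ ω, ω ∉ {ω | t ≤ Ψ N ω} ∪ {ω | ε / 2 ≤ |esdEval (A N ω) g - ∫ x, g x ∂μ|} := by
    by_contra! hall
    have hunion := measureReal_union_le (μ := P) {ω | t ≤ Ψ N ω}
      {ω | ε / 2 ≤ |esdEval (A N ω) g - ∫ x, g x ∂μ|}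
    rw [Set.eq_univ_of_forall hall, probReal_univ] at hunion
    linarith
  rw [Set.mem_union, not_or] at hω
  have hΨt : Ψ N ω < b + ε / 2 := not_le.1 hω.1
  have hdist : |esdEval (A N ω) g - ∫ x, g x ∂μ| < ε / 2 := not_le.1 hω.2
  linarith [hle N ω, (abs_lt.1 hdist).1]

theorem lintegral_ofReal_lt_top_of_forall_integral_min_le {α : Type*} [MeasurableSpace α]
    {μ : Measure α} [IsFiniteMeasure μ] {h : α → ℝ} (hh : Measurable h) (h0 : ∀ x, 0 ≤ h x) {B : ℝ}
    (hB : ∀ K : ℕ, ∫ x, min (h x) K ∂μ ≤ B) : ∫⁻ x, ENNReal.ofReal (h x) ∂μ < ⊤ := by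
  have hmin0 (K : ℕ) (x : α) : 0 ≤ min (h x) K := le_min (h0 x) K.cast_nonneg
  have hint (K : ℕ) : Integrable (fun x => min (h x) (K : ℝ)) μ :=
    Integrable.of_bound (C := K) (by fun_prop) (ae_of_all _ fun x => by
      rw [norm_of_nonneg (hmin0 K x)]
      exact min_le_right _ _)
  have hlim : Tendsto (fun K : ℕ => ∫⁻ x, ENNReal.ofReal (min (h x) K) ∂μ) atTop
      (nhds (∫⁻ x, ENNReal.ofReal (h x) ∂μ)) := by
    refine lintegral_tendsto_of_tendsto_of_monotone (fun K => by fun_prop)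
      (ae_of_all _ fun x K K' hK => ?_) (ae_of_all _ fun x => tendsto_const_nhds.congr' ?_)
    · exact ENNReal.ofReal_le_ofReal (min_le_min_left _ (Nat.cast_le.2 hK))
    · filter_upwards [eventually_ge_atTop ⌈h x⌉₊] with K hK
      rw [min_eq_left (Nat.ceil_le.1 hK)]
  refine (le_of_tendsto' hlim fun K => ?_).trans_lt (ENNReal.ofReal_lt_top (r := B))
  rw [← ofReal_integral_eq_lintegral_ofReal (hint K) (ae_of_all _ (hmin0 K))]
  exact ENNReal.ofReal_le_ofReal (hB K)

section Limit

variable {Ω : Type*} {X : ℤ → ℤ → Ω → ℝ} {νd : Measure (ℝ × ℝ)}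

/-- The upper bound that `sum_min_eigenvalues_pow_le` gives for the average of
`x ↦ min (x ^ (2 * m)) K` over the spectrum of `scaledW X N ω`. The contraction is the resolvent
of `cosGram νd N`, and the free parameter is `η = (max 1 K)⁻¹`. -/
def truncatedMomentBound (X : ℤ → ℤ → Ω → ℝ) (νd : Measure (ℝ × ℝ)) (m : ℕ) (K : ℝ) (N : ℕ)
    (ω : Ω) : ℝ :=
  (N : ℝ)⁻¹ * (4 ^ m * (((resolventAtOne (cosGram νd N) * scaledW X N ω
      * resolventAtOne (cosGram νd N)) ^ (2 * m)).trace
    + (frobeniusSq (scaledW X N ω)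
      + max 1 K ^ 2 * frobeniusSq (1 - resolventAtOne (cosGram νd N)))))

namespace truncatedMomentBound

theorem nonneg [IsFiniteMeasure νd] (m : ℕ) (K : ℝ) (N : ℕ) (ω : Ω) :
    0 ≤ truncatedMomentBound X νd m K N ω := by
  have hG := resolventAtOne.isHermitian (posSemidef_cosGram νd (N := N))
  have htrace := trace_pow_two_mul_mul_nonneg
    (isHermitian_mul_mul_self hG (isHermitian_scaledW (X := X) N ω)) Matrix.PosSemidef.one m
  rw [mul_one] at htrace
  have hW := frobeniusSq_nonneg (scaledW X N ω)
  have hres := frobeniusSq_nonneg (1 - resolventAtOne (cosGram νd N))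
  unfold truncatedMomentBound
  positivity

theorem esdEval_le [IsFiniteMeasure νd] {m : ℕ} (hm : m ≠ 0) (K : ℝ) (N : ℕ) (ω : Ω) :
    esdEval (scaledW X N ω) (fun x => min (x ^ (2 * m)) K) ≤ truncatedMomentBound X νd m K N ω := by
  have hD := posSemidef_cosGram νd (N := N)
  have hM : 0 < max 1 K := lt_max_of_lt_left one_pos
  rw [esdEval, dif_pos (isHermitian_scaledW N ω), truncatedMomentBound]
  gcongr
  refine (sum_min_eigenvalues_pow_le _ (resolventAtOne.isHermitian hD)
    (resolventAtOne.posSemidef_one_sub_mul_self hD) hm K (inv_pos.2 hM)).trans_eq ?_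
  field_simp

variable [MeasurableSpace Ω] {P : Measure Ω} [IsProbabilityMeasure P]

theorem integrable (hX : StatGauss P X) (m : ℕ) (K : ℝ) (N : ℕ) :
    Integrable (truncatedMomentBound X νd m K N) P :=
  (((hX.integrable_trace_sandwich_scaledW_pow _ _).add
    ((hX.integrable_frobeniusSq_scaledW N).add (integrable_const _))).const_mul _).const_mul _

theorem integral_le {ν : Measure (ℝ × ℝ)} {f : ℝ × ℝ → ℝ} (hX : StatGauss P X)
    (hν : SpectralDecomp P X ν νd f) {m : ℕ} (K : ℝ) {N : ℕ} {C ε : ℝ} (hC : 0 ≤ C) (hε : 0 ≤ ε)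
    (htrace : ∫ ω, ((resolventAtOne (cosGram νd N) * scaledW X N ω
      * resolventAtOne (cosGram νd N)) ^ (2 * m)).trace ∂P ≤ C * N)
    (hres : frobeniusSq (1 - resolventAtOne (cosGram νd N)) ≤ ε * N) :
    ∫ ω, truncatedMomentBound X νd m K N ω ∂P
      ≤ 4 ^ m * (C + 4 * ν.real Set.univ + max 1 K ^ 2 * ε) := by
  have htr := hX.integrable_trace_sandwich_scaledW_pow (resolventAtOne (cosGram νd N)) (2 * m)
  have hfrob := hX.integrable_frobeniusSq_scaledW N
  have hconst : Integrable (fun _ : Ω => max 1 K ^ 2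
      * frobeniusSq (1 - resolventAtOne (cosGram νd N))) P := integrable_const _
  have hscaled := hX.integral_frobeniusSq_scaledW_le hν N
  simp only [truncatedMomentBound]
  rw [integral_const_mul, integral_const_mul, integral_add htr (hfrob.fun_add hconst),
    integral_add hfrob hconst, integral_const, probReal_univ, one_smul]
  calc _ ≤ (N : ℝ)⁻¹ * (4 ^ m * (C * N + (4 * ν.real Set.univ * N + max 1 K ^ 2 * (ε * N)))) := by
        gcongr
    _ = ((N : ℝ)⁻¹ * N) * (4 ^ m * (C + 4 * ν.real Set.univ + max 1 K ^ 2 * ε)) := by ring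
    _ ≤ _ := mul_le_of_le_one_left (by positivity) inv_mul_le_one

end truncatedMomentBound

theorem exists_forall_integral_min_pow_le [MeasurableSpace Ω] {P : Measure Ω}
    [IsProbabilityMeasure P] {ν : Measure (ℝ × ℝ)} {f : ℝ × ℝ → ℝ} (hX : StatGauss P X)
    (hν : SpectralDecomp P X ν νd f) {μ : Measure ℝ} (hconv : ESDTendstoInProb P (scaledW X) μ)
    {m : ℕ} (hm : m ≠ 0) (hfm : Integrable (fun p => f p ^ m) (volume.restrict specBox)) :
    ∃ B : ℝ, ∀ K : ℕ, ∫ x, min (x ^ (2 * m)) (K : ℝ) ∂μ ≤ B := by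
  have := hν.isFiniteMeasure_discrete
  obtain ⟨q, rfl⟩ := Nat.exists_eq_succ_of_ne_zero hm
  obtain ⟨s, hs, hs0⟩ := hν.discrete
  obtain ⟨C, hC, htrace⟩ := hX.exists_integral_trace_sandwich_pow_le hν hfm
  refine ⟨4 ^ (q + 1) * (C + 4 * ν.real Set.univ + 1), fun K => ?_⟩
  have hM : 0 < max 1 (K : ℝ) := lt_max_of_lt_left one_pos
  have hmin0 (x : ℝ) : 0 ≤ min (x ^ (2 * (q + 1))) (K : ℝ) :=
    le_min ((even_two_mul _).pow_nonneg x) K.cast_nonneg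
  refine hconv.integral_le (by fun_prop)
    ⟨K, fun x => (abs_of_nonneg (hmin0 x)).trans_le (min_le_right _ _)⟩
    (truncatedMomentBound.nonneg (νd := νd) (q + 1) K)
    (truncatedMomentBound.integrable hX (q + 1) K) (truncatedMomentBound.esdEval_le hm K) ?_
  have hres := tendsto_frobeniusSq_one_sub_resolventAtOne_cosGram νd hs hs0
  filter_upwards [hres.eventually_le_const (inv_pos.2 (pow_pos hM 2)), eventually_gt_atTop 0]
    with N hN hNpos
  have hD := posSemidef_cosGram νd (N := N)
  rw [div_le_iff₀ (Nat.cast_pos.2 hNpos)] at hN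
  refine (truncatedMomentBound.integral_le hX hν K hC (by positivity) (htrace N _
    (resolventAtOne.isHermitian hD) (resolventAtOne.posSemidef_one_sub_mul_self hD)
    (resolventAtOne.posSemidef_one_sub_mul_mul_self hD)) hN).trans_eq ?_
  rw [mul_inv_cancel₀ (pow_pos hM 2).ne']

end Limit

theorem statement3_general {Ω : Type*} [MeasurableSpace Ω] (P : Measure Ω)
    [IsProbabilityMeasure P] (X : ℤ → ℤ → Ω → ℝ) (ν νd : Measure (ℝ × ℝ))
    (f : ℝ × ℝ → ℝ) (hX : StatGauss P X) (hν : SpectralDecomp P X ν νd f)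
    (μf : Measure ℝ) (hμf : IsProbabilityMeasure μf)
    (hconv : ESDTendstoInProb P (scaledW X) μf)
    (m : ℕ) (hfm : ∫⁻ q in specBox, ENNReal.ofReal (f q) ^ m < ⊤) :
    ∫⁻ x, ENNReal.ofReal (x ^ (2 * m)) ∂μf < ⊤ := by
  rcases eq_or_ne m 0 with rfl | hm
  · simp
  obtain ⟨B, hB⟩ := exists_forall_integral_min_pow_le hX hν hconv hm (hν.integrable_density_pow hfm)
  exact lintegral_ofReal_lt_top_of_forall_integral_min_le (measurable_id.pow_const _)
    (fun x => (even_two_mul m).pow_nonneg x) hB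

/-- **Theorem 3, part 1.** For `m ≥ 2`, if `‖f‖_m < ∞` then the `2m`-th moment
of `μ_f` is finite. -/
theorem statement3 {Ω : Type} [MeasurableSpace Ω] (P : Measure Ω)
    [IsProbabilityMeasure P] (X : ℤ → ℤ → Ω → ℝ) (ν νd : Measure (ℝ × ℝ))
    (f : ℝ × ℝ → ℝ) (hX : StatGauss P X) (hν : SpectralDecomp P X ν νd f)
    (μf : Measure ℝ) (hμf : IsProbabilityMeasure μf)
    (hconv : ESDTendstoInProb P (scaledW X) μf)
    (m : ℕ) (hm : 2 ≤ m)
    (hfm : ∫⁻ q in specBox, ENNReal.ofReal (f q) ^ m < ⊤) :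
    ∫⁻ x, ENNReal.ofReal (x ^ (2 * m)) ∂μf < ⊤ :=
  statement3_general P X ν νd f hX hν μf hμf hconv m hfm

end
end
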